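/- Let d, N ∈ ℕ, p ≥ 2, α ∈ (0,1), c₁, c₂ > 0, Q₀ ⊂ ℝ^d a cube, and let u ∈ W^{1,p}(Q₀;ℝ^N) be such that: (i) V(∇u) ∈ W^{1,2}_loc(Q₀) and ∫_Q|∇(V(∇u))|² ≤ (c₁/R²)∫_{4Q}|V(∇u)|² for every cube Q of sidelength R with 4Q ⊂ Q₀; (ii) u has a continuous representative with [u]_{C^α(Q)} ≤ c₂R^{1−α}((⨍_{2Q}|∇u|^p)^{1/p} + 1) for every cube Q of sidelength R with 3Q ⊂ Q₀. Then for every q ∈ (p, p + 2/(1−α)) one has ∇u ∈ L^q_loc(Q₀), and there is C > 0, depending only on d, N, p, q, α, c₁, c₂, such that (⨍_Q|∇u|^q)^{1/q} ≤ C((⨍_{2Q}|∇u|^p)^{1/p} + 1) for every cube Q with 2Q ⊂ Q₀. -/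

import Mathlib

open MeasureTheory Filter Metric Set
open scoped ENNReal Topology RealInnerProductSpace

noncomputable section

/-- `ℝ^d` with the Euclidean norm. -/
abbrev Ed (d : ℕ) : Type := EuclideanSpace ℝ (Fin d)
/-- `ℝ^N` with the Euclidean norm. -/
abbrev En (N : ℕ) : Type := EuclideanSpace ℝ (Fin N)
/-- The space of `N × d` matrices with the Euclidean (Frobenius) norm. -/
abbrev Mat (N d : ℕ) : Type := EuclideanSpace ℝ (Fin N × Fin d)

/-- The open axis-parallel cube with center `c` and sidelength `R`. -/
def cube {d : ℕ} (c : Ed d) (R : ℝ) : Set (Ed d) := {x | ∀ i, |x i - c i| < R / 2}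

/-- The `i`-th partial derivative of a scalar function. -/
def pder {d : ℕ} (φ : Ed d → ℝ) (i : Fin d) (x : Ed d) : ℝ :=
  fderiv ℝ φ x (EuclideanSpace.single i 1)

/-- `g` is the weak gradient of `f` on `U`: for every smooth compactly supported scalar test
function `φ` with support in `U` and all indices `a`, `i`,
`∫_U f^a ∂_i φ = −∫_U g^a_i φ`. -/
def IsWeakGrad {d : ℕ} {ι : Type} [Fintype ι] (U : Set (Ed d))
    (f : Ed d → EuclideanSpace ℝ ι) (g : Ed d → EuclideanSpace ℝ (ι × Fin d)) : Prop :=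
  ∀ φ : Ed d → ℝ, ContDiff ℝ (⊤ : ℕ∞) φ → HasCompactSupport φ → tsupport φ ⊆ U →
    ∀ (a : ι) (i : Fin d),
      ∫ x in U, f x a * pder φ i x = - ∫ x in U, g x (a, i) * φ x

/-- The classical gradient matrix of a (smooth) vector-valued function. -/
def clGrad {d N : ℕ} (φ : Ed d → En N) (x : Ed d) : Mat N d :=
  (WithLp.equiv 2 _).symm fun q => fderiv ℝ φ x (EuclideanSpace.single q.2 1) q.1

/-- `V(η) = |η|^{(p-2)/2} η` (so that `V(0) = 0`). -/
def Vm (p : ℝ) {ι : Type} [Fintype ι] (η : EuclideanSpace ℝ ι) : EuclideanSpace ℝ ι :=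
  ‖η‖ ^ ((p - 2) / 2) • η

/-- `u` (with weak gradient `g`) is a weak solution of `div 𝒜(∇u) = 0` on `U`:
`∫_U 𝒜(∇u)·∇φ = 0` for all smooth compactly supported `φ` with support in `U`. -/
def IsWeakSol {d N : ℕ} (U : Set (Ed d)) (𝒜 : Mat N d → Mat N d)
    (g : Ed d → Mat N d) : Prop :=
  ∀ φ : Ed d → En N, ContDiff ℝ (⊤ : ℕ∞) φ → HasCompactSupport φ → tsupport φ ⊆ U →
    ∫ x in U, ⟪𝒜 (g x), clGrad φ x⟫ = 0

/-!
Mollifying `∇u` at scale `r` moves the derivative onto the kernel, so the mollified gradient is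
bounded by the oscillation of `u` at scale `r` divided by `r`, hence, by the Hölder estimate, by a
multiple of `r ^ (α - 1)`. Choose `r ∼ λ ^ (-1 / (1 - α))` so that this bound is at most `λ / 2`.
Where `|∇u| > λ`, the gradient then differs from its mollification by at least `λ / 2`. Since
`|a - b| ^ p ≤ 2 ^ p * |V(a) - V(b)| ^ 2`, Chebyshev's inequality and the `L²` difference-quotient
bound for `V(∇u)` give `|{|∇u| > λ}| ≲ λ ^ (-p) * r ^ 2 ∼ λ ^ (-(p + 2 / (1 - α)))`. This is a weak
`L^s` bound with `s = p + 2 / (1 - α)`, and the layer-cake formula gives the `L^q` bound for every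
`q < s`.
-/

section VMap

theorem half_add_mul_norm_sub_le_norm_smul_sub_smul {E : Type*} [NormedAddCommGroup E]
    [InnerProductSpace ℝ E] {a b : E} {s t : ℝ} (h : 0 ≤ (s - t) * (‖a‖ ^ 2 - ‖b‖ ^ 2)) :
    (s + t) / 2 * ‖a - b‖ ≤ ‖s • a - t • b‖ := by
  have inner_eq : ⟪s • a - t • b, a - b⟫ =
      (s + t) / 2 * ‖a - b‖ ^ 2 + (s - t) * (‖a‖ ^ 2 - ‖b‖ ^ 2) / 2 := by
    rw [norm_sub_sq_real]
    simp only [inner_sub_left, inner_sub_right, real_inner_smul_left, real_inner_self_eq_norm_sq,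
      real_inner_comm a b]
    ring
  rcases (norm_nonneg (a - b)).eq_or_lt with h₀ | h₀
  · simp [← h₀]
  · refine le_of_mul_le_mul_right ?_ h₀
    linarith [real_inner_le_norm (s • a - t • b) (a - b)]

theorem norm_sub_rpow_le {E : Type*} [SeminormedAddCommGroup E] (a b : E) {s : ℝ} (hs : 0 ≤ s) :
    ‖a - b‖ ^ s ≤ 2 ^ s * (‖a‖ ^ s + ‖b‖ ^ s) := by
  wlog hab : ‖b‖ ≤ ‖a‖ generalizing a b
  · rw [norm_sub_rev, add_comm]
    exact this b a (le_of_not_ge hab)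
  calc ‖a - b‖ ^ s ≤ (2 * ‖a‖) ^ s := by
        gcongr
        linarith [norm_sub_le a b]
    _ = 2 ^ s * ‖a‖ ^ s := Real.mul_rpow zero_le_two (norm_nonneg a)
    _ ≤ 2 ^ s * (‖a‖ ^ s + ‖b‖ ^ s) := by
        gcongr
        linarith [Real.rpow_nonneg (norm_nonneg b) s]

variable {ι : Type} [Fintype ι] {p : ℝ}

theorem norm_Vm_sq (hp : p ≠ 0) (a : EuclideanSpace ℝ ι) : ‖Vm p a‖ ^ 2 = ‖a‖ ^ p := by
  have norm_eq : ‖Vm p a‖ = ‖a‖ ^ (p / 2) := by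
    rw [Vm, norm_smul, Real.norm_of_nonneg (by positivity),
      ← Real.rpow_add_one' (norm_nonneg a) (by contrapose! hp; linarith)]
    ring_nf
  rw [norm_eq, ← Real.rpow_mul_natCast (norm_nonneg a)]
  norm_num

theorem enorm_Vm_sq (hp : 0 < p) (a : EuclideanSpace ℝ ι) : ‖Vm p a‖ₑ ^ 2 = ‖a‖ₑ ^ p := by
  rw [← ofReal_norm, ← ofReal_norm, ← ENNReal.ofReal_pow (norm_nonneg _), norm_Vm_sq hp.ne',
    ENNReal.ofReal_rpow_of_nonneg (norm_nonneg a) hp.le]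

theorem continuous_Vm (hp : 2 ≤ p) :
    Continuous (Vm p : EuclideanSpace ℝ ι → EuclideanSpace ℝ ι) :=
  (continuous_norm.rpow_const fun _ => Or.inr (by linarith)).smul continuous_id

theorem norm_sub_rpow_le_norm_Vm_sub_sq (hp : 2 ≤ p) (a b : EuclideanSpace ℝ ι) :
    ‖a - b‖ ^ p ≤ 2 ^ p * ‖Vm p a - Vm p b‖ ^ 2 := by
  have hs : 0 ≤ (p - 2) / 2 := by linarith
  have hV : (‖a‖ ^ ((p - 2) / 2) + ‖b‖ ^ ((p - 2) / 2)) / 2 * ‖a - b‖ ≤ ‖Vm p a - Vm p b‖ := by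
    refine half_add_mul_norm_sub_le_norm_smul_sub_smul ?_
    rcases le_total ‖a‖ ‖b‖ with h | h
    · exact mul_nonneg_of_nonpos_of_nonpos (sub_nonpos.2 (by gcongr)) (sub_nonpos.2 (by gcongr))
    · exact mul_nonneg (sub_nonneg.2 (by gcongr)) (sub_nonneg.2 (by gcongr))
  have hroot : ‖a - b‖ ^ (p / 2) ≤ 2 ^ (p / 2) * ‖Vm p a - Vm p b‖ := by
    have hp2 : p / 2 = (p - 2) / 2 + 1 := by ring
    rw [hp2, Real.rpow_add_one' (norm_nonneg _) (by linarith), Real.rpow_add_one two_ne_zero]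
    calc ‖a - b‖ ^ ((p - 2) / 2) * ‖a - b‖
        ≤ 2 ^ ((p - 2) / 2) * (‖a‖ ^ ((p - 2) / 2) + ‖b‖ ^ ((p - 2) / 2)) * ‖a - b‖ := by
          gcongr
          exact norm_sub_rpow_le a b hs
      _ = 2 ^ ((p - 2) / 2) * 2 *
          ((‖a‖ ^ ((p - 2) / 2) + ‖b‖ ^ ((p - 2) / 2)) / 2 * ‖a - b‖) := by ring
      _ ≤ 2 ^ ((p - 2) / 2) * 2 * ‖Vm p a - Vm p b‖ := by gcongr
  have hsq (x : ℝ) (hx : 0 ≤ x) : (x ^ (p / 2)) ^ 2 = x ^ p := by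
    rw [← Real.rpow_mul_natCast hx]
    norm_num
  calc ‖a - b‖ ^ p = (‖a - b‖ ^ (p / 2)) ^ 2 := (hsq _ (norm_nonneg _)).symm
    _ ≤ (2 ^ (p / 2) * ‖Vm p a - Vm p b‖) ^ 2 := by gcongr
    _ = 2 ^ p * ‖Vm p a - Vm p b‖ ^ 2 := by rw [mul_pow, hsq 2 zero_le_two]

theorem enorm_sub_rpow_le_enorm_Vm_sub_sq (hp : 2 ≤ p) (a b : EuclideanSpace ℝ ι) :
    ‖a - b‖ₑ ^ p ≤ ENNReal.ofReal (2 ^ p) * ‖Vm p a - Vm p b‖ₑ ^ 2 := by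
  rw [← ofReal_norm, ← ofReal_norm, ENNReal.ofReal_rpow_of_nonneg (norm_nonneg _) (by linarith),
    ← ENNReal.ofReal_pow (norm_nonneg _), ← ENNReal.ofReal_mul (by positivity)]
  exact ENNReal.ofReal_le_ofReal (norm_sub_rpow_le_norm_Vm_sub_sq hp a b)

theorem memLp_two_Vm {X : Type*} [MeasurableSpace X] {μ : Measure X}
    {f : X → EuclideanSpace ℝ ι} (hp : 2 ≤ p) (hf : MemLp f (ENNReal.ofReal p) μ) :
    MemLp (fun x => Vm p (f x)) 2 μ := by
  have hp₀ : 0 < p := by linarith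
  refine ⟨(continuous_Vm hp).comp_aestronglyMeasurable hf.1, ?_⟩
  have hfin := (eLpNorm_lt_top_iff_lintegral_rpow_enorm_lt_top (by simpa using hp₀)
    ENNReal.ofReal_ne_top).1 hf.2
  rw [ENNReal.toReal_ofReal hp₀.le] at hfin
  rw [eLpNorm_lt_top_iff_lintegral_rpow_enorm_lt_top two_ne_zero ENNReal.ofNat_ne_top]
  simpa only [ENNReal.toReal_ofNat, ENNReal.rpow_two, enorm_Vm_sq hp₀] using hfin

end VMap

section Cube

variable {d : ℕ} {c c' x z : Ed d} {R R' : ℝ}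

theorem cube_eq_preimage_pi_Ioo (c : Ed d) (R : ℝ) :
    cube c R = WithLp.ofLp ⁻¹' univ.pi fun i => Ioo (c i - R / 2) (c i + R / 2) := by
  ext x
  simp [cube, ← Real.ball_eq_Ioo, Real.dist_eq]

theorem isOpen_cube (c : Ed d) (R : ℝ) : IsOpen (cube c R) := by
  rw [cube_eq_preimage_pi_Ioo]
  exact (isOpen_set_pi finite_univ fun i _ => isOpen_Ioo).preimage (PiLp.continuous_ofLp _ _)

theorem measurableSet_cube (c : Ed d) (R : ℝ) : MeasurableSet (cube c R) :=
  (isOpen_cube c R).measurableSet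

theorem volume_cube (c : Ed d) (R : ℝ) : volume (cube c R) = ENNReal.ofReal R ^ d := by
  rw [cube_eq_preimage_pi_Ioo, (PiLp.volume_preserving_ofLp (Fin d)).measure_preimage
    (MeasurableSet.univ_pi fun i => measurableSet_Ioo).nullMeasurableSet, Real.volume_pi_Ioo]
  simp

theorem volume_real_cube (c : Ed d) (hR : 0 ≤ R) : volume.real (cube c R) = R ^ d := by
  rw [measureReal_def, volume_cube, ENNReal.toReal_pow, ENNReal.toReal_ofReal hR]

instance isFiniteMeasure_restrict_cube : IsFiniteMeasure (volume.restrict (cube c R)) where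
  measure_univ_lt_top := by
    rw [Measure.restrict_apply_univ, volume_cube]
    exact ENNReal.pow_lt_top ENNReal.ofReal_lt_top

theorem cube_subset_cube (h : ∀ i, |c i - c' i| ≤ (R' - R) / 2) : cube c R ⊆ cube c' R' :=
  fun x hx i => by linarith [hx i, h i, abs_sub_le (x i) (c i) (c' i)]

theorem cube_subset_cube_of_le (c : Ed d) (h : R ≤ R') : cube c R ⊆ cube c R' :=
  fun _ hx i => (hx i).trans_le (by linarith)

theorem cube_subset_cube_of_mem (hc : c ∈ cube c' R) : cube c R' ⊆ cube c' (R + R') :=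
  cube_subset_cube fun i => by linarith [hc i]

theorem add_mem_cube (hx : x ∈ cube c R) (hz : ‖z‖ ≤ (R' - R) / 2) : x + z ∈ cube c R' := by
  have hxz : x ∈ cube (c - z) R' := by
    refine cube_subset_cube (fun i => ?_) hx
    simpa using (PiLp.norm_apply_le z i).trans hz
  intro i
  simpa [add_sub_assoc, sub_sub_eq_add_sub, add_comm] using hxz i

theorem ball_subset_cube (c : Ed d) (R : ℝ) : ball c (R / 2) ⊆ cube c R :=
  fun x hx i => by simpa using (PiLp.norm_apply_le (x - c) i).trans_lt (mem_ball_iff_norm.1 hx)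

theorem add_smul_mem_cube_iff (hR : 0 < R) {ε : ℝ} :
    c + R • x ∈ cube (c + R • z) (R * ε) ↔ x ∈ cube z ε := by
  refine forall_congr' fun i => ?_
  have : (c + R • x) i - (c + R • z) i = R * (x i - z i) := by
    simp only [PiLp.add_apply, PiLp.smul_apply, smul_eq_mul]
    ring
  rw [this, abs_mul, abs_of_pos hR, mul_div_assoc, mul_lt_mul_iff_right₀ hR]

theorem totallyBounded_cube (c : Ed d) (R : ℝ) : TotallyBounded (cube c R) := by
  have hbdd : Bornology.IsBounded (cube c R) := by
    rw [cube_eq_preimage_pi_Ioo]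
    exact (PiLp.antilipschitzWith_ofLp 2 _).isBounded_preimage
      (Bornology.IsBounded.pi fun i => isBounded_Ioo _ _)
  exact hbdd.isCompact_closure.totallyBounded.subset subset_closure

theorem exists_finset_cube_subset_iUnion_cube (d : ℕ) {ε : ℝ} (hε : 0 < ε) :
    ∃ Z : Finset (Ed d), ∀ (c : Ed d) (R : ℝ), 0 < R →
      (∀ z ∈ Z, c + R • z ∈ cube c R) ∧ cube c R ⊆ ⋃ z ∈ Z, cube (c + R • z) (R * ε) := by
  obtain ⟨Z, hZsub, hZfin, hZcover⟩ :=
    finite_approx_of_totallyBounded (totallyBounded_cube (0 : Ed d) 1) (ε / 2) (half_pos hε)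
  refine ⟨hZfin.toFinset, fun c R hR => ?_⟩
  have mem_iff (x : Ed d) : c + R • x ∈ cube c R ↔ x ∈ cube 0 1 := by
    simpa using add_smul_mem_cube_iff (c := c) (x := x) (z := 0) hR (ε := 1)
  refine ⟨fun z hz => (mem_iff z).2 (hZsub (hZfin.mem_toFinset.1 hz)), fun y hy => ?_⟩
  obtain ⟨x, rfl⟩ : ∃ x, y = c + R • x := ⟨R⁻¹ • (y - c), by simp [smul_inv_smul₀ hR.ne']⟩
  obtain ⟨z, hz, hxz⟩ := mem_iUnion₂.1 (hZcover ((mem_iff x).1 hy))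
  exact mem_iUnion₂.2 ⟨z, hZfin.mem_toFinset.2 hz,
    (add_smul_mem_cube_iff hR).2 (ball_subset_cube z ε hxz)⟩

end Cube

section WeakDirDeriv

open scoped ContDiff

theorem integral_fderiv_sub_smul {E : Type*} [NormedAddCommGroup E] [NormedSpace ℝ E]
    {φ : E → ℝ} (hφ : ContDiff ℝ 1 φ) (y z : E) :
    ∫ t in Ioc (0 : ℝ) 1, fderiv ℝ φ (y - t • z) z = φ y - φ (y - z) := by
  have hderiv (t : ℝ) :
      HasDerivAt (fun t : ℝ => -φ (y - t • z)) (fderiv ℝ φ (y - t • z) z) t := by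
    have hline : HasDerivAt (fun t : ℝ => y - t • z) (-z) t := by
      simpa using ((hasDerivAt_id t).smul_const z).const_sub y
    simpa [Function.comp_def] using
      ((hφ.differentiable one_ne_zero _).hasFDerivAt.comp_hasDerivAt t hline).fun_neg
  have hcont : Continuous fun t : ℝ => fderiv ℝ φ (y - t • z) z :=
    ((hφ.continuous_fderiv one_ne_zero).comp (by fun_prop)).clm_apply continuous_const
  rw [← intervalIntegral.integral_of_le zero_le_one,
    intervalIntegral.integral_eq_sub_of_hasDerivAt (fun t _ => hderiv t)
      (hcont.intervalIntegrable 0 1)]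
  simp only [one_smul, zero_smul, sub_zero]
  ring

theorem lintegral_rpow_le_lintegral_rpow {X : Type*} [MeasurableSpace X] {ν : Measure X}
    [IsProbabilityMeasure ν] {g : X → ℝ≥0∞} (hg : AEMeasurable g ν) {r : ℝ} (hr : 1 ≤ r) :
    (∫⁻ x, g x ∂ν) ^ r ≤ ∫⁻ x, g x ^ r ∂ν := by
  have h := eLpNorm'_le_eLpNorm'_of_exponent_le (μ := ν) one_pos hr
    hg.aestronglyMeasurable
  simp only [eLpNorm', enorm_eq_self, ENNReal.rpow_one, div_one] at h
  rwa [one_div, ENNReal.le_rpow_inv_iff (by linarith)] at h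

variable {E F : Type*} [NormedAddCommGroup E] [NormedSpace ℝ E] [MeasurableSpace E]
  [NormedAddCommGroup F] [NormedSpace ℝ F] {μ : Measure E} {U K : Set E} {z : E} {f H : E → F}

/-- `H` is the weak derivative of `f` in the direction `z` on `U`, tested against smooth scalar
functions with compact support in `U`; the integrals run over the whole space. -/
def IsWeakDirDeriv (μ : Measure E) (U : Set E) (z : E) (f H : E → F) : Prop :=
  ∀ φ : E → ℝ, ContDiff ℝ ∞ φ → HasCompactSupport φ → tsupport φ ⊆ U →
    ∫ x, fderiv ℝ φ x z • f x ∂μ = -∫ x, φ x • H x ∂μ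

theorem IsWeakDirDeriv.comp_add_right [BorelSpace E] [μ.IsAddRightInvariant]
    (h : IsWeakDirDeriv μ U z f H) (w : E) :
    IsWeakDirDeriv μ ((· + w) ⁻¹' U) z (fun x => f (x + w)) (fun x => H (x + w)) := by
  intro φ hφ hφc hφU
  have hfderiv (y : E) : fderiv ℝ (fun y => φ (y - w)) y = fderiv ℝ φ (y - w) := by
    simp only [sub_eq_add_neg]
    exact fderiv_comp_add_right (-w)
  have hsupp : tsupport (fun y => φ (y - w)) ⊆ U := by
    refine (tsupport_comp_eq_preimage φ (Homeomorph.subRight w)).trans_subset fun y hy => ?_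
    simpa using hφU hy
  have hφw := h (fun y => φ (y - w)) (hφ.comp (by fun_prop))
    (hφc.comp_homeomorph (Homeomorph.subRight w)) hsupp
  simp only [hfderiv] at hφw
  rw [← integral_sub_right_eq_self _ w, ← integral_sub_right_eq_self (fun x => φ x • _) w]
  simpa only [sub_add_cancel] using hφw

variable [FiniteDimensional ℝ E] [BorelSpace E] [μ.IsAddHaarMeasure]

theorem measurePreserving_add_smul (ν : Measure ℝ) [SFinite ν] (z : E) :
    MeasurePreserving (fun q : ℝ × E => (q.1, q.2 + q.1 • z)) (ν.prod μ) (ν.prod μ) :=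
  (MeasurePreserving.id ν).skew_product (g := fun t x => x + t • z) (by fun_prop)
    (Eventually.of_forall fun t => (measurePreserving_add_right μ (t • z)).map_eq)

theorem integrable_prod_comp_add_smul {F : Type*} [NormedAddCommGroup F] {H : E → F}
    (ν : Measure ℝ) [IsFiniteMeasure ν] (z : E) (hH : Integrable H μ) :
    Integrable (fun q : ℝ × E => H (q.2 + q.1 • z)) (ν.prod μ) :=
  (measurePreserving_add_smul ν z).integrable_comp_of_integrable (hH.comp_snd ν)

theorem integral_smul_sub_eq_integral_integral_fderiv [CompleteSpace F] {φ : E → ℝ}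
    (hφ : ContDiff ℝ 1 φ) (hφc : HasCompactSupport φ) (hf : Integrable f μ) (z : E) :
    ∫ x, φ x • (f (x + z) - f x) ∂μ =
      -∫ t in Ioc (0 : ℝ) 1, ∫ x, fderiv ℝ φ x z • f (x + t • z) ∂μ := by
  obtain ⟨B, hB⟩ := hφc.exists_bound_of_continuous hφ.continuous
  have hφ' : Continuous fun y => fderiv ℝ φ y z :=
    (hφ.continuous_fderiv one_ne_zero).clm_apply continuous_const
  obtain ⟨B', hB'⟩ := (hφc.fderiv_apply ℝ z).exists_bound_of_continuous hφ'
  have hint (w : E) : Integrable (fun x => φ (x - w) • f x) μ :=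
    hf.bdd_smul _ (hφ.continuous.comp (by fun_prop)).aestronglyMeasurable
      (Eventually.of_forall fun x => hB (x - w))
  have hprod : Integrable (fun q : ℝ × E => fderiv ℝ φ (q.2 - q.1 • z) z • f q.2)
      ((volume.restrict (Ioc (0 : ℝ) 1)).prod μ) :=
    (hf.comp_snd _).bdd_smul _ (hφ'.comp (by fun_prop)).aestronglyMeasurable
      (Eventually.of_forall fun q => hB' (q.2 - q.1 • z))
  have htranslate : ∫ x, φ x • f (x + z) ∂μ = ∫ x, φ (x - z) • f x ∂μ := by
    rw [← integral_sub_right_eq_self _ z]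
    simp only [sub_add_cancel]
  calc ∫ x, φ x • (f (x + z) - f x) ∂μ
      = ∫ x, φ (x - z) • f x ∂μ - ∫ x, φ x • f x ∂μ := by
        simp only [smul_sub]
        rw [integral_sub ?_ (by simpa using hint 0), htranslate]
        simpa using (hint z).comp_add_right z
    _ = -∫ x, (∫ t in Ioc (0 : ℝ) 1, fderiv ℝ φ (x - t • z) z • f x) ∂μ := by
        rw [← integral_sub (hint z) (by simpa using hint 0), ← integral_neg]
        refine integral_congr_ae (Eventually.of_forall fun x => ?_)
        simp only [integral_smul_const, integral_fderiv_sub_smul hφ, ← sub_smul,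
          ← neg_smul, neg_sub]
    _ = -∫ t in Ioc (0 : ℝ) 1, ∫ x, fderiv ℝ φ x z • f (x + t • z) ∂μ := by
        rw [← integral_integral_swap (f := fun t x => fderiv ℝ φ (x - t • z) z • f x) hprod]
        refine congrArg _ (integral_congr_ae (Eventually.of_forall fun t => ?_))
        simpa only [sub_add_cancel] using
          integral_sub_right_eq_self (fun x => fderiv ℝ φ x z • f (x + t • z)) (t • z)

theorem IsWeakDirDeriv.ae_sub_eq_setIntegral [CompleteSpace F] (h : IsWeakDirDeriv μ U z f H)
    (hK : IsOpen K) (hKU : ∀ x ∈ K, ∀ t ∈ Icc (0 : ℝ) 1, x + t • z ∈ U)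
    (hf : Integrable f μ) (hH : Integrable H μ) :
    ∀ᵐ x ∂μ, x ∈ K → f (x + z) - f x = ∫ t in Ioc (0 : ℝ) 1, H (x + t • z) := by
  have hHprod := integrable_prod_comp_add_smul (volume.restrict (Ioc (0 : ℝ) 1)) z hH
  have hHint : Integrable (fun x => ∫ t in Ioc (0 : ℝ) 1, H (x + t • z)) μ :=
    hHprod.integral_prod_right
  have hfdiff : Integrable (fun x => f (x + z) - f x) μ := (hf.comp_add_right z).sub hf
  suffices ∀ φ : E → ℝ, ContDiff ℝ ∞ φ → HasCompactSupport φ → tsupport φ ⊆ K →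
      ∫ x, φ x • (f (x + z) - f x - ∫ t in Ioc (0 : ℝ) 1, H (x + t • z)) ∂μ = 0 by
    filter_upwards [hK.ae_eq_zero_of_integral_contDiff_smul_eq_zero
      ((hfdiff.sub hHint).locallyIntegrable.locallyIntegrableOn K) this] with x hx hxK
    exact sub_eq_zero.1 (hx hxK)
  intro φ hφ hφc hφK
  obtain ⟨B, hB⟩ := hφc.exists_bound_of_continuous hφ.continuous
  have hweak : ∀ t ∈ Ioc (0 : ℝ) 1, ∫ x, fderiv ℝ φ x z • f (x + t • z) ∂μ =
      -∫ x, φ x • H (x + t • z) ∂μ := fun t ht =>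
    h.comp_add_right (t • z) φ hφ hφc
      (hφK.trans fun x hx => hKU x hx t (Ioc_subset_Icc_self ht))
  have hswap : Integrable (fun q : ℝ × E => φ q.2 • H (q.2 + q.1 • z))
      ((volume.restrict (Ioc (0 : ℝ) 1)).prod μ) :=
    hHprod.bdd_smul _ (hφ.continuous.comp continuous_snd).aestronglyMeasurable
      (Eventually.of_forall fun q => hB q.2)
  have hsmul {G : E → F} (hG : Integrable G μ) : Integrable (fun x => φ x • G x) μ :=
    hG.bdd_smul _ hφ.continuous.aestronglyMeasurable (Eventually.of_forall hB)
  simp only [smul_sub (φ _) (_ - _)]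
  rw [integral_sub (hsmul hfdiff) (hsmul hHint),
    integral_smul_sub_eq_integral_integral_fderiv (hφ.of_le (mod_cast le_top)) hφc hf,
    setIntegral_congr_fun measurableSet_Ioc hweak, integral_neg, neg_neg,
    integral_integral_swap hswap]
  simp only [integral_smul, sub_self]

theorem IsWeakDirDeriv.lintegral_enorm_sub_rpow_le [CompleteSpace F]
    (h : IsWeakDirDeriv μ U z f H) (hK : IsOpen K)
    (hKU : ∀ x ∈ K, ∀ t ∈ Icc (0 : ℝ) 1, x + t • z ∈ U)
    (hf : Integrable f μ) (hH : Integrable H μ) {r : ℝ} (hr : 1 ≤ r) :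
    ∫⁻ x in K, ‖f (x + z) - f x‖ₑ ^ r ∂μ ≤ ∫⁻ x, ‖H x‖ₑ ^ r ∂μ := by
  have : IsProbabilityMeasure (volume.restrict (Ioc (0 : ℝ) 1)) := ⟨by simp⟩
  have hHprod := integrable_prod_comp_add_smul (volume.restrict (Ioc (0 : ℝ) 1)) z hH
  calc ∫⁻ x in K, ‖f (x + z) - f x‖ₑ ^ r ∂μ
      ≤ ∫⁻ x in K, (∫⁻ t in Ioc (0 : ℝ) 1, ‖H (x + t • z)‖ₑ ^ r) ∂μ := by
        refine lintegral_mono_ae ?_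
        filter_upwards [ae_restrict_of_ae (h.ae_sub_eq_setIntegral hK hKU hf hH),
          ae_restrict_of_ae hHprod.swap.aestronglyMeasurable.prodMk_left,
          ae_restrict_mem hK.measurableSet] with x hx hmeas hxK
        rw [hx hxK]
        refine le_trans ?_ (lintegral_rpow_le_lintegral_rpow hmeas.enorm hr)
        gcongr
        exact enorm_integral_le_lintegral_enorm _
    _ ≤ ∫⁻ x, (∫⁻ t in Ioc (0 : ℝ) 1, ‖H (x + t • z)‖ₑ ^ r) ∂μ := setLIntegral_le_lintegral _ _
    _ = ∫⁻ t in Ioc (0 : ℝ) 1, ∫⁻ x, ‖H (x + t • z)‖ₑ ^ r ∂μ :=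
        lintegral_lintegral_swap (hHprod.swap.aestronglyMeasurable.enorm.pow_const r)
    _ = ∫⁻ x, ‖H x‖ₑ ^ r ∂μ := by
        simp only [lintegral_add_right_eq_self (fun x => ‖H x‖ₑ ^ r), lintegral_const,
          measure_univ, mul_one]

end WeakDirDeriv

section WeakGrad

variable {d : ℕ} {ι : Type} [Fintype ι] {U K : Set (Ed d)} {f f' : Ed d → EuclideanSpace ℝ ι}
  {g g' : Ed d → EuclideanSpace ℝ (ι × Fin d)} {φ : Ed d → ℝ}

theorem pder_eq_zero_of_notMem_tsupport {x : Ed d} (hx : x ∉ tsupport φ) (i : Fin d) :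
    pder φ i x = 0 := by
  have : fderiv ℝ φ x = 0 := Function.notMem_support.1 fun h => hx (support_fderiv_subset ℝ h)
  rw [pder, this, zero_apply]

theorem continuous_pder (hφ : ContDiff ℝ 1 φ) (i : Fin d) : Continuous (pder φ i) :=
  (hφ.continuous_fderiv one_ne_zero).clm_apply continuous_const

theorem hasCompactSupport_pder (hφ : HasCompactSupport φ) (i : Fin d) :
    HasCompactSupport (pder φ i) :=
  hφ.fderiv_apply ℝ _

theorem fderiv_apply_eq_sum_pder (φ : Ed d → ℝ) (x z : Ed d) :
    fderiv ℝ φ x z = ∑ i, z i * pder φ i x := by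
  conv_lhs => rw [← (EuclideanSpace.basisFun (Fin d) ℝ).sum_repr z]
  simp [pder]

theorem isWeakGrad_iff_integral :
    IsWeakGrad U f g ↔ ∀ φ : Ed d → ℝ, ContDiff ℝ (⊤ : ℕ∞) φ → HasCompactSupport φ →
      tsupport φ ⊆ U → ∀ (a : ι) (i : Fin d),
        ∫ x, f x a * pder φ i x = -∫ x, g x (a, i) * φ x := by
  refine forall₄_congr fun φ _ _ hφU => forall₂_congr fun a i => ?_
  rw [setIntegral_eq_integral_of_forall_compl_eq_zero fun x hx => ?_,
    setIntegral_eq_integral_of_forall_compl_eq_zero fun x hx => ?_]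
  · rw [image_eq_zero_of_notMem_tsupport fun h => hx (hφU h), mul_zero]
  · rw [pder_eq_zero_of_notMem_tsupport fun h => hx (hφU h), mul_zero]

theorem IsWeakGrad.mono (h : IsWeakGrad U f g) (hKU : K ⊆ U) : IsWeakGrad K f g := by
  rw [isWeakGrad_iff_integral] at h ⊢
  exact fun φ hφ hφc hφK => h φ hφ hφc (hφK.trans hKU)

theorem IsWeakGrad.congr_ae (h : IsWeakGrad U f g) (hf : f =ᵐ[volume.restrict U] f')
    (hg : g =ᵐ[volume.restrict U] g') : IsWeakGrad U f' g' := by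
  intro φ hφ hφc hφU a i
  have hleft : ∫ x in U, f' x a * pder φ i x = ∫ x in U, f x a * pder φ i x :=
    integral_congr_ae (by filter_upwards [hf] with x hx; rw [hx])
  have hright : ∫ x in U, g' x (a, i) * φ x = ∫ x in U, g x (a, i) * φ x :=
    integral_congr_ae (by filter_upwards [hg] with x hx; rw [hx])
  rw [hleft, hright, h φ hφ hφc hφU a i]

/-- The matrix–vector product `M ↦ M z`, the derivative in the direction `z` of a function whose
gradient is `M`. -/
def applyVec (z : Ed d) : EuclideanSpace ℝ (ι × Fin d) →L[ℝ] EuclideanSpace ℝ ι :=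
  LinearMap.toContinuousLinearMap
    { toFun := fun M => WithLp.toLp 2 fun a => ∑ i, z i * M (a, i)
      map_add' := fun M M' => by ext a; simp [mul_add, Finset.sum_add_distrib]
      map_smul' := fun s M => by ext a; simp [Finset.mul_sum, mul_left_comm] }

theorem applyVec_apply (z : Ed d) (M : EuclideanSpace ℝ (ι × Fin d)) (a : ι) :
    applyVec z M a = ∑ i, z i * M (a, i) := rfl

theorem norm_applyVec_le (z : Ed d) (M : EuclideanSpace ℝ (ι × Fin d)) :
    ‖applyVec z M‖ ≤ ‖z‖ * ‖M‖ := by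
  refine le_of_sq_le_sq ?_ (by positivity)
  simp only [mul_pow, EuclideanSpace.norm_sq_eq, Real.norm_eq_abs, sq_abs, applyVec_apply,
    Fintype.sum_prod_type, Finset.mul_sum]
  refine Finset.sum_le_sum fun a _ => ?_
  simpa only [Finset.mul_sum] using
    Finset.sum_mul_sq_le_sq_mul_sq Finset.univ (fun i => z i) fun i => M (a, i)

theorem enorm_applyVec_le (z : Ed d) (M : EuclideanSpace ℝ (ι × Fin d)) :
    ‖applyVec z M‖ₑ ≤ ‖z‖ₑ * ‖M‖ₑ := by
  rw [← ofReal_norm, ← ofReal_norm, ← ofReal_norm, ← ENNReal.ofReal_mul (norm_nonneg z)]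
  exact ENNReal.ofReal_le_ofReal (norm_applyVec_le z M)

theorem eval_integral_eq_sum_mul_integral {X κ : Type*} [MeasurableSpace X] [Fintype κ]
    {μ : Measure X} {F : X → EuclideanSpace ℝ ι} {G : ι → κ → X → ℝ} {w : κ → ℝ}
    (hG : ∀ a i, Integrable (G a i) μ) (hF : ∀ x a, F x a = ∑ i, w i * G a i x) (a : ι) :
    (∫ x, F x ∂μ) a = ∑ i, w i * ∫ x, G a i x ∂μ := by
  have hint (a : ι) (i : κ) : Integrable (fun x => w i * G a i x) μ := (hG a i).const_mul (w i)
  rw [eval_integral_piLp fun b => ?_]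
  · simp only [hF, integral_finsetSum _ fun i _ => hint a i, integral_const_mul]
  · simp only [hF]
    exact integrable_finsetSum _ fun i _ => hint b i

theorem IsWeakGrad.setIntegral_fderiv_smul (h : IsWeakGrad U f g) (hf : IntegrableOn f U)
    (hg : IntegrableOn g U) (hφ : ContDiff ℝ (⊤ : ℕ∞) φ) (hφc : HasCompactSupport φ)
    (hφU : tsupport φ ⊆ U) (z : Ed d) :
    ∫ x in U, fderiv ℝ φ x z • f x = -∫ x in U, φ x • applyVec z (g x) := by
  have hφ₁ : ContDiff ℝ 1 φ := hφ.of_le (mod_cast le_top)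
  obtain ⟨B, hB⟩ := hφc.exists_bound_of_continuous hφ.continuous
  have hφg (a : ι) (i : Fin d) : IntegrableOn (fun x => g x (a, i) * φ x) U :=
    (hg.eval_piLp (a, i)).mul_bdd hφ.continuous.aestronglyMeasurable (Eventually.of_forall hB)
  have hφf (a : ι) (i : Fin d) : IntegrableOn (fun x => f x a * pder φ i x) U := by
    obtain ⟨B', hB'⟩ :=
      (hasCompactSupport_pder hφc i).exists_bound_of_continuous (continuous_pder hφ₁ i)
    exact (hf.eval_piLp a).mul_bdd (continuous_pder hφ₁ i).aestronglyMeasurable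
      (Eventually.of_forall hB')
  ext a
  have hleft : (∫ x in U, fderiv ℝ φ x z • f x) a = ∑ i, z i * ∫ x in U, f x a * pder φ i x :=
    eval_integral_eq_sum_mul_integral hφf (fun x b => by
      simp only [PiLp.smul_apply, smul_eq_mul, fderiv_apply_eq_sum_pder, Finset.sum_mul, mul_assoc,
        mul_comm (pder φ _ x)]) a
  have hright : (∫ x in U, φ x • applyVec z (g x)) a = ∑ i, z i * ∫ x in U, g x (a, i) * φ x :=
    eval_integral_eq_sum_mul_integral hφg (fun x b => by
      simp only [PiLp.smul_apply, smul_eq_mul, applyVec_apply, mul_comm (φ x), Finset.sum_mul,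
        mul_assoc]) a
  rw [hleft, PiLp.neg_apply, hright, ← Finset.sum_neg_distrib]
  simp only [h φ hφ hφc hφU, mul_neg]

theorem IsWeakGrad.isWeakDirDeriv_indicator (h : IsWeakGrad U f g) (hU : MeasurableSet U)
    (hf : IntegrableOn f U) (hg : IntegrableOn g U) (z : Ed d) :
    IsWeakDirDeriv volume U z (U.indicator f) (U.indicator fun x => applyVec z (g x)) := by
  intro φ hφ hφc hφU
  simp only [← indicator_smul_apply U (fun x => fderiv ℝ φ x z) f,
    ← indicator_smul_apply U φ, integral_indicator hU]
  exact h.setIntegral_fderiv_smul hf hg hφ hφc hφU z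

theorem IsWeakGrad.lintegral_enorm_sub_rpow_le (h : IsWeakGrad U f g) (hU : MeasurableSet U)
    (hf : IntegrableOn f U) (hg : IntegrableOn g U) (hK : IsOpen K) {z : Ed d}
    (hKU : ∀ x ∈ K, ∀ t ∈ Icc (0 : ℝ) 1, x + t • z ∈ U) {r : ℝ} (hr : 1 ≤ r) :
    ∫⁻ x in K, ‖f (x + z) - f x‖ₑ ^ r ≤ ‖z‖ₑ ^ r * ∫⁻ x in U, ‖g x‖ₑ ^ r := by
  have hr₀ : 0 < r := by linarith
  have hgz : Integrable (fun x => applyVec z (g x)) (volume.restrict U) :=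
    ContinuousLinearMap.integrable_comp (applyVec (ι := ι) z) hg
  calc ∫⁻ x in K, ‖f (x + z) - f x‖ₑ ^ r
      = ∫⁻ x in K, ‖U.indicator f (x + z) - U.indicator f x‖ₑ ^ r := by
        refine setLIntegral_congr_fun hK.measurableSet fun x hx => ?_
        have hx₀ : x ∈ U := by simpa using hKU x hx 0 (by simp)
        have hx₁ : x + z ∈ U := by simpa using hKU x hx 1 (by simp)
        simp only [indicator_of_mem hx₀, indicator_of_mem hx₁]
    _ ≤ ∫⁻ x, ‖U.indicator (fun x => applyVec z (g x)) x‖ₑ ^ r :=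
        (h.isWeakDirDeriv_indicator hU hf hg z).lintegral_enorm_sub_rpow_le hK hKU
          (hf.integrable_indicator hU) (IntegrableOn.integrable_indicator hgz hU) hr
    _ = ∫⁻ x in U, ‖applyVec z (g x)‖ₑ ^ r := by
        rw [← lintegral_indicator hU]
        refine lintegral_congr fun x => ?_
        by_cases hx : x ∈ U <;> simp [hx, hr₀]
    _ ≤ ∫⁻ x in U, ‖z‖ₑ ^ r * ‖g x‖ₑ ^ r := by
        refine lintegral_mono fun x => ?_
        rw [← ENNReal.mul_rpow_of_nonneg _ _ hr₀.le]
        gcongr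
        exact enorm_applyVec_le z (g x)
    _ = ‖z‖ₑ ^ r * ∫⁻ x in U, ‖g x‖ₑ ^ r :=
        lintegral_const_mul' _ _ (ENNReal.rpow_ne_top_of_nonneg hr₀.le enorm_ne_top)

end WeakGrad

section Mollification

variable {d : ℕ} {ι : Type} [Fintype ι] {U : Set (Ed d)} {f : Ed d → EuclideanSpace ℝ ι}
  {g : Ed d → EuclideanSpace ℝ (ι × Fin d)} {ψ : Ed d → ℝ} {x : Ed d} {r ω : ℝ}

theorem add_smul_mem_closedBall (x : Ed d) (hr : 0 ≤ r) {z : Ed d} (hz : z ∈ closedBall 0 1) :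
    x + r • z ∈ closedBall x r := by
  rw [mem_closedBall_zero_iff] at hz
  rw [mem_closedBall_iff_norm, add_sub_cancel_left, norm_smul, Real.norm_of_nonneg hr]
  exact mul_le_of_le_one_right hr hz

theorem integral_comp_add_smul (Φ : Ed d → ℝ) (x : Ed d) (hr : 0 < r) :
    ∫ z, Φ (x + r • z) = (r ^ d)⁻¹ * ∫ y, Φ y := by
  rw [Measure.integral_comp_smul volume (fun w => Φ (x + w)) r, integral_add_left_eq_self Φ x]
  simp [abs_of_pos hr]

theorem pder_comp_inv_smul_sub (ψ : Ed d → ℝ) (x : Ed d) (r : ℝ) (i : Fin d) (y : Ed d) :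
    pder (fun y => ψ (r⁻¹ • (y - x))) i y = r⁻¹ * pder ψ i (r⁻¹ • (y - x)) := by
  rw [pder, fderiv_comp_sub (f := fun w => ψ (r⁻¹ • w)), fderiv_comp_smul]
  rfl

theorem tsupport_comp_inv_smul_sub_subset (hψ : tsupport ψ ⊆ closedBall 0 1) (x : Ed d)
    (hr : 0 < r) : tsupport (fun y => ψ (r⁻¹ • (y - x))) ⊆ closedBall x r := by
  refine closure_minimal (fun y hy => ?_) isClosed_closedBall
  simpa [smul_inv_smul₀ hr.ne'] using add_smul_mem_closedBall x hr.le (hψ (subset_tsupport _ hy))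

theorem integrable_pder (hψ : ContDiff ℝ 1 ψ) (hψc : HasCompactSupport ψ) (i : Fin d) :
    Integrable (pder ψ i) :=
  (continuous_pder hψ i).integrable_of_hasCompactSupport (hasCompactSupport_pder hψc i)

theorem integral_pder_eq_zero (hψ : ContDiff ℝ 1 ψ) (hψc : HasCompactSupport ψ) (i : Fin d) :
    ∫ x, pder ψ i x = 0 := by
  have hint : Integrable fun x => 1 * fderiv ℝ ψ x (EuclideanSpace.single i 1) :=
    (integrable_pder hψ hψc i).congr (Eventually.of_forall fun x => (one_mul _).symm)
  simpa [pder] using integral_mul_fderiv_eq_neg_fderiv_mul_of_integrable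
    (μ := (volume : Measure (Ed d))) (f := fun _ => (1 : ℝ)) (g := ψ)
    (v := EuclideanSpace.single i 1) (by simp) hint
    (by simpa using hψ.continuous.integrable_of_hasCompactSupport hψc)
    (fun x _ => by fun_prop) (fun x _ => hψ.differentiable one_ne_zero x)

theorem IsWeakGrad.integral_mul_comp_add_smul (h : IsWeakGrad U f g)
    (hψ : ContDiff ℝ (⊤ : ℕ∞) ψ) (hψsupp : tsupport ψ ⊆ closedBall 0 1) (hr : 0 < r)
    (hxU : closedBall x r ⊆ U) (a : ι) (i : Fin d) :
    ∫ z, ψ z * g (x + r • z) (a, i) = -∫ z, f (x + r • z) a * (r⁻¹ * pder ψ i z) := by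
  have hsupp := tsupport_comp_inv_smul_sub_subset hψsupp x hr
  have hrescale (z : Ed d) : r⁻¹ • (x + r • z - x) = z := by
    rw [add_sub_cancel_left, inv_smul_smul₀ hr.ne']
  have hweak := isWeakGrad_iff_integral.1 h (fun y => ψ (r⁻¹ • (y - x))) (hψ.comp (by fun_prop))
    ((isCompact_closedBall x r).of_isClosed_subset (isClosed_tsupport _) hsupp)
    (hsupp.trans hxU) a i
  have hleft := integral_comp_add_smul (fun y => g y (a, i) * ψ (r⁻¹ • (y - x))) x hr
  have hright := integral_comp_add_smul
    (fun y => f y a * pder (fun y => ψ (r⁻¹ • (y - x))) i y) x hr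
  simp only [pder_comp_inv_smul_sub, hrescale] at hleft hright hweak
  simp only [mul_comm (ψ _), hleft, hright, hweak, mul_neg, neg_neg]

theorem hasCompactSupport_of_tsupport_subset_closedBall (hψsupp : tsupport ψ ⊆ closedBall 0 1) :
    HasCompactSupport ψ :=
  (isCompact_closedBall 0 1).of_isClosed_subset (isClosed_tsupport ψ) hψsupp

theorem integrable_comp_add_smul_mul_pder (hU : MeasurableSet U) (hf : IntegrableOn f U)
    (hψ : ContDiff ℝ 1 ψ) (hψsupp : tsupport ψ ⊆ closedBall 0 1) (hr : 0 < r)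
    (hxU : closedBall x r ⊆ U) (a : ι) (i : Fin d) :
    Integrable fun z => f (x + r • z) a * (r⁻¹ * pder ψ i z) := by
  have hψc := hasCompactSupport_of_tsupport_subset_closedBall hψsupp
  obtain ⟨B, hB⟩ :=
    (hasCompactSupport_pder hψc i).exists_bound_of_continuous (continuous_pder hψ i)
  have hfU := (((hf.integrable_indicator hU).comp_add_left x).comp_smul hr.ne').eval_piLp a
  refine ((hfU.mul_bdd (continuous_pder hψ i).aestronglyMeasurable
    (Eventually.of_forall hB)).const_mul r⁻¹).congr (Eventually.of_forall fun z => ?_)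
  by_cases hz : z ∈ tsupport ψ
  · have hzU := hxU (add_smul_mem_closedBall x hr.le (hψsupp hz))
    simp only [indicator_of_mem hzU]
    ring
  · simp [pder_eq_zero_of_notMem_tsupport hz]

theorem IsWeakGrad.abs_integral_mul_comp_add_smul_le (h : IsWeakGrad U f g)
    (hU : MeasurableSet U) (hf : IntegrableOn f U) (hψ : ContDiff ℝ (⊤ : ℕ∞) ψ)
    (hψsupp : tsupport ψ ⊆ closedBall 0 1) (hr : 0 < r) (hxU : closedBall x r ⊆ U)
    (hω : ∀ y ∈ closedBall x r, ‖f y - f x‖ ≤ ω) (a : ι) (i : Fin d) :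
    |∫ z, ψ z * g (x + r • z) (a, i)| ≤ ω / r * ∫ z, |pder ψ i z| := by
  have hψ₁ : ContDiff ℝ 1 ψ := hψ.of_le (mod_cast le_top)
  have hψc := hasCompactSupport_of_tsupport_subset_closedBall hψsupp
  have hpder := integrable_pder hψ₁ hψc i
  have hosc : ∫ z, ψ z * g (x + r • z) (a, i) =
      -∫ z, (f (x + r • z) a - f x a) * (r⁻¹ * pder ψ i z) := by
    simp only [sub_mul]
    rw [integral_sub (integrable_comp_add_smul_mul_pder hU hf hψ₁ hψsupp hr hxU a i)
      ((hpder.const_mul _).const_mul _), integral_const_mul, integral_const_mul,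
      integral_pder_eq_zero hψ₁ hψc, mul_zero, mul_zero, sub_zero,
      h.integral_mul_comp_add_smul hψ hψsupp hr hxU]
  rw [hosc, abs_neg, ← Real.norm_eq_abs, ← integral_const_mul]
  refine norm_integral_le_of_norm_le (hpder.abs.const_mul _) (Eventually.of_forall fun z => ?_)
  by_cases hz : z ∈ tsupport ψ
  · have hfz : ‖f (x + r • z) a - f x a‖ ≤ ω :=
      (PiLp.norm_apply_le (f (x + r • z) - f x) a).trans
        (hω _ (add_smul_mem_closedBall x hr.le (hψsupp hz)))
    rw [norm_mul, norm_mul, norm_inv, Real.norm_of_nonneg hr.le, Real.norm_eq_abs (pder ψ i z),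
      div_eq_mul_inv, mul_assoc]
    gcongr
  · simp [pder_eq_zero_of_notMem_tsupport hz]

/-- A fixed smooth probability density on `ℝ^d` supported in the closed unit ball. -/
def mollifier (d : ℕ) : Ed d → ℝ :=
  (⟨1 / 2, 1, by norm_num, by norm_num⟩ : ContDiffBump (0 : Ed d)).normed volume

/-- The probability measure with density `mollifier d`; the mollification of `g` at scale `r` is
`x ↦ ∫ z, g (x + r • z) ∂mollifierMeasure d`. -/
def mollifierMeasure (d : ℕ) : Measure (Ed d) :=
  volume.withDensity fun z => ENNReal.ofReal (mollifier d z)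

theorem contDiff_mollifier (d : ℕ) : ContDiff ℝ (⊤ : ℕ∞) (mollifier d) :=
  ContDiffBump.contDiff_normed _

theorem mollifier_nonneg (z : Ed d) : 0 ≤ mollifier d z :=
  ContDiffBump.nonneg_normed _ z

theorem tsupport_mollifier (d : ℕ) : tsupport (mollifier d) = closedBall 0 1 :=
  ContDiffBump.tsupport_normed_eq _

theorem measurable_ofReal_mollifier (d : ℕ) :
    Measurable fun z => ENNReal.ofReal (mollifier d z) :=
  (contDiff_mollifier d).continuous.measurable.ennreal_ofReal

instance isProbabilityMeasure_mollifierMeasure : IsProbabilityMeasure (mollifierMeasure d) where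
  measure_univ := by
    rw [mollifierMeasure, withDensity_apply _ MeasurableSet.univ, Measure.restrict_univ,
      ← ofReal_integral_eq_lintegral_ofReal (f := mollifier d)
        (ContDiffBump.integrable_normed _) (Eventually.of_forall mollifier_nonneg), mollifier,
      ContDiffBump.integral_normed, ENNReal.ofReal_one]

theorem ae_norm_le_one_mollifierMeasure (d : ℕ) : ∀ᵐ z ∂mollifierMeasure d, ‖z‖ ≤ 1 := by
  rw [mollifierMeasure, ae_withDensity_iff (measurable_ofReal_mollifier d)]
  refine Eventually.of_forall fun z hz => ?_
  have : z ∈ tsupport (mollifier d) :=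
    subset_tsupport _ fun h => hz (by rw [h, ENNReal.ofReal_zero])
  rwa [tsupport_mollifier, mem_closedBall_zero_iff] at this

theorem integral_mollifierMeasure (F : Ed d → ℝ) :
    ∫ z, F z ∂mollifierMeasure d = ∫ z, mollifier d z * F z := by
  rw [mollifierMeasure, integral_withDensity_eq_integral_toReal_smul
    (measurable_ofReal_mollifier d) (Eventually.of_forall fun _ => ENNReal.ofReal_lt_top)]
  simp only [ENNReal.toReal_ofReal (mollifier_nonneg _), smul_eq_mul]

theorem norm_le_sum_abs (x : EuclideanSpace ℝ ι) : ‖x‖ ≤ ∑ i, |x i| := by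
  refine le_of_sq_le_sq ?_ (Finset.sum_nonneg fun i _ => abs_nonneg _)
  rw [EuclideanSpace.norm_sq_eq]
  exact Finset.sum_sq_le_sq_sum_of_nonneg fun i _ => abs_nonneg _

/-- The constant `∑_{a, i} ‖∂_i ψ‖_{L¹}`, with `ψ` the mollifier, that bounds the mollified gradient
of a function by its oscillation divided by the scale. -/
def mollifierConst (ι : Type) [Fintype ι] (d : ℕ) : ℝ :=
  ∑ q : ι × Fin d, ∫ z, |pder (mollifier d) q.2 z|

theorem mollifierConst_nonneg (ι : Type) [Fintype ι] (d : ℕ) : 0 ≤ mollifierConst ι d :=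
  Finset.sum_nonneg fun _ _ => integral_nonneg fun _ => abs_nonneg _

theorem IsWeakGrad.norm_integral_mollifierMeasure_le (h : IsWeakGrad U f g)
    (hU : MeasurableSet U) (hf : IntegrableOn f U) (hr : 0 < r) (hxU : closedBall x r ⊆ U)
    (hω : ∀ y ∈ closedBall x r, ‖f y - f x‖ ≤ ω) :
    ‖∫ z, g (x + r • z) ∂mollifierMeasure d‖ ≤ mollifierConst ι d * (ω / r) := by
  have hω₀ : 0 ≤ ω := (norm_nonneg _).trans (hω x (mem_closedBall_self hr.le))
  by_cases hg : Integrable (fun z => g (x + r • z)) (mollifierMeasure d)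
  · refine (norm_le_sum_abs _).trans ?_
    rw [mollifierConst, Finset.sum_mul]
    refine Finset.sum_le_sum fun q _ => ?_
    rw [eval_integral_piLp hg.eval_piLp, integral_mollifierMeasure, mul_comm]
    exact h.abs_integral_mul_comp_add_smul_le hU hf (contDiff_mollifier d)
      (tsupport_mollifier d).subset hr hxU hω q.1 q.2
  · rw [integral_undef hg, norm_zero]
    exact mul_nonneg (mollifierConst_nonneg ι d) (by positivity)

end Mollification

section LevelSets

variable {d : ℕ} {κ : Type} [Fintype κ] {U K : Set (Ed d)} {p r lam : ℝ}

theorem enorm_le_enorm_integral_add_lintegral_enorm_sub {X E : Type*} [MeasurableSpace X]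
    [NormedAddCommGroup E] [NormedSpace ℝ E] [CompleteSpace E] {m : Measure X}
    [IsProbabilityMeasure m] {f : X → E} (hf : AEStronglyMeasurable f m) (a : E) :
    ‖a‖ₑ ≤ ‖∫ z, f z ∂m‖ₑ + ∫⁻ z, ‖f z - a‖ₑ ∂m := by
  by_cases hfa : Integrable (fun z => f z - a) m
  · have hfi : Integrable f m := by
      simpa [Pi.add_def] using Integrable.add hfa (integrable_const a)
    calc ‖a‖ₑ = ‖∫ z, f z ∂m - ∫ z, f z - a ∂m‖ₑ := by
          rw [integral_sub hfi (integrable_const a), integral_const, probReal_univ, one_smul,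
            sub_sub_cancel]
      _ ≤ ‖∫ z, f z ∂m‖ₑ + ‖∫ z, f z - a ∂m‖ₑ := enorm_sub_le
      _ ≤ ‖∫ z, f z ∂m‖ₑ + ∫⁻ z, ‖f z - a‖ₑ ∂m := by
          gcongr
          exact enorm_integral_le_lintegral_enorm _
  · have htop : ∫⁻ z, ‖f z - a‖ₑ ∂m = ∞ := by
      by_contra hne
      exact hfa ⟨hf.sub aestronglyMeasurable_const, lt_top_iff_ne_top.2 hne⟩
    rw [htop, add_top]
    exact le_top

theorem ofReal_half_rpow_le_lintegral_enorm_Vm_sub_sq {X : Type*} [MeasurableSpace X]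
    {m : Measure X} [IsProbabilityMeasure m] {f : X → EuclideanSpace ℝ κ} (hp : 2 ≤ p)
    (hf : AEStronglyMeasurable f m) (hmean : ‖∫ z, f z ∂m‖ ≤ lam / 2) {a : EuclideanSpace ℝ κ}
    (ha : lam < ‖a‖) :
    ENNReal.ofReal (lam / 2) ^ p ≤
      ENNReal.ofReal (2 ^ p) * ∫⁻ z, ‖Vm p (f z) - Vm p a‖ₑ ^ 2 ∂m := by
  have hlam : 0 ≤ lam / 2 := (norm_nonneg _).trans hmean
  have hdist : ENNReal.ofReal (lam / 2) ≤ ∫⁻ z, ‖f z - a‖ₑ ∂m := by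
    refine (ENNReal.add_le_add_iff_left (ENNReal.ofReal_ne_top (r := lam / 2))).1 ?_
    calc ENNReal.ofReal (lam / 2) + ENNReal.ofReal (lam / 2)
        = ENNReal.ofReal lam := by rw [← ENNReal.ofReal_add hlam hlam, add_halves]
      _ ≤ ‖a‖ₑ := by
        rw [← ofReal_norm]
        exact ENNReal.ofReal_le_ofReal ha.le
      _ ≤ ‖∫ z, f z ∂m‖ₑ + ∫⁻ z, ‖f z - a‖ₑ ∂m :=
        enorm_le_enorm_integral_add_lintegral_enorm_sub hf a
      _ ≤ ENNReal.ofReal (lam / 2) + ∫⁻ z, ‖f z - a‖ₑ ∂m := by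
        rw [← ofReal_norm (∫ z, f z ∂m)]
        gcongr
  calc ENNReal.ofReal (lam / 2) ^ p
      ≤ (∫⁻ z, ‖f z - a‖ₑ ∂m) ^ p := by gcongr
    _ ≤ ∫⁻ z, ‖f z - a‖ₑ ^ p ∂m :=
        lintegral_rpow_le_lintegral_rpow (hf.sub aestronglyMeasurable_const).enorm (by linarith)
    _ ≤ ∫⁻ z, ENNReal.ofReal (2 ^ p) * ‖Vm p (f z) - Vm p a‖ₑ ^ 2 ∂m :=
        lintegral_mono fun z => enorm_sub_rpow_le_enorm_Vm_sub_sq hp _ _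
    _ = _ := lintegral_const_mul' _ _ ENNReal.ofReal_ne_top

theorem measurable_enorm_comp_add_smul_sub_sq {f : Ed d → EuclideanSpace ℝ κ}
    (hf : StronglyMeasurable f) (r : ℝ) :
    Measurable fun y : Ed d × Ed d => ‖f (y.1 + r • y.2) - f y.1‖ₑ ^ 2 := by
  have hshift : Measurable fun y : Ed d × Ed d => y.1 + r • y.2 := by fun_prop
  exact ((hf.measurable.comp hshift).sub (hf.measurable.comp measurable_fst)).enorm.pow_const 2

theorem IsWeakGrad.lintegral_lintegral_enorm_sub_sq_le {m : Measure (Ed d)}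
    [IsProbabilityMeasure m] (hm : ∀ᵐ z ∂m, ‖z‖ ≤ 1) {f : Ed d → EuclideanSpace ℝ κ}
    {g : Ed d → EuclideanSpace ℝ (κ × Fin d)} (h : IsWeakGrad U f g)
    (hfm : StronglyMeasurable f) (hU : MeasurableSet U) (hf : IntegrableOn f U)
    (hg : IntegrableOn g U) (hK : IsOpen K) (hr : 0 ≤ r) (hKU : ∀ x ∈ K, closedBall x r ⊆ U) :
    ∫⁻ x in K, (∫⁻ z, ‖f (x + r • z) - f x‖ₑ ^ 2 ∂m) ≤
      ENNReal.ofReal (r ^ 2) * ∫⁻ x in U, ‖g x‖ₑ ^ 2 := by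
  have hshift (z : Ed d) (hz : ‖z‖ ≤ 1) :
      ∫⁻ x in K, ‖f (x + r • z) - f x‖ₑ ^ 2 ≤ ENNReal.ofReal (r ^ 2) * ∫⁻ x in U, ‖g x‖ₑ ^ 2 := by
    have hrz : ‖r • z‖ ≤ r := by
      rw [norm_smul, Real.norm_of_nonneg hr]
      exact mul_le_of_le_one_right hr hz
    have hseg : ∀ x ∈ K, ∀ t ∈ Icc (0 : ℝ) 1, x + t • r • z ∈ U := by
      refine fun x hx t ht => hKU x hx ?_
      rw [mem_closedBall_iff_norm, add_sub_cancel_left, norm_smul, Real.norm_of_nonneg ht.1]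
      exact (mul_le_of_le_one_left (norm_nonneg _) ht.2).trans hrz
    have hquot := h.lintegral_enorm_sub_rpow_le hU hf hg hK hseg one_le_two
    simp only [ENNReal.rpow_two] at hquot
    refine hquot.trans ?_
    rw [← ofReal_norm, ← ENNReal.ofReal_pow (norm_nonneg _)]
    gcongr
  rw [lintegral_lintegral_swap (measurable_enorm_comp_add_smul_sub_sq hfm r).aemeasurable]
  calc ∫⁻ z, (∫⁻ x in K, ‖f (x + r • z) - f x‖ₑ ^ 2) ∂m
      ≤ ∫⁻ _, ENNReal.ofReal (r ^ 2) * (∫⁻ x in U, ‖g x‖ₑ ^ 2) ∂m :=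
        lintegral_mono_ae (hm.mono hshift)
    _ = _ := by rw [lintegral_const, measure_univ, mul_one]

theorem IsWeakGrad.rpow_mul_volume_lt_norm_le {m : Measure (Ed d)} [IsProbabilityMeasure m]
    (hm : ∀ᵐ z ∂m, ‖z‖ ≤ 1) {g : Ed d → EuclideanSpace ℝ κ}
    {W : Ed d → EuclideanSpace ℝ (κ × Fin d)} (h : IsWeakGrad U (fun x => Vm p (g x)) W)
    (hp : 2 ≤ p) (hgm : StronglyMeasurable g) (hU : MeasurableSet U)
    (hV : IntegrableOn (fun x => Vm p (g x)) U) (hW : IntegrableOn W U) (hK : IsOpen K)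
    (hr : 0 ≤ r) (hKU : ∀ x ∈ K, closedBall x r ⊆ U)
    (hmean : ∀ x ∈ K, ‖∫ z, g (x + r • z) ∂m‖ ≤ lam / 2) :
    ENNReal.ofReal (lam / 2) ^ p * volume.restrict K {x | lam < ‖g x‖} ≤
      ENNReal.ofReal (2 ^ p) * (ENNReal.ofReal (r ^ 2) * ∫⁻ x in U, ‖W x‖ₑ ^ 2) := by
  have hVm : StronglyMeasurable fun x => Vm p (g x) :=
    (continuous_Vm hp).comp_stronglyMeasurable hgm
  let F (x : Ed d) : ℝ≥0∞ :=
    ENNReal.ofReal (2 ^ p) * ∫⁻ z, ‖Vm p (g (x + r • z)) - Vm p (g x)‖ₑ ^ 2 ∂m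
  have hFm : Measurable F :=
    ((measurable_enorm_comp_add_smul_sub_sq hVm r).lintegral_prod_right' (ν := m)).const_mul _
  have hF (x : Ed d) (hx : x ∈ K) (hgx : lam < ‖g x‖) : ENNReal.ofReal (lam / 2) ^ p ≤ F x :=
    ofReal_half_rpow_le_lintegral_enorm_Vm_sub_sq hp
      (hgm.comp_measurable (by fun_prop)).aestronglyMeasurable (hmean x hx) hgx
  calc ENNReal.ofReal (lam / 2) ^ p * volume.restrict K {x | lam < ‖g x‖}
      ≤ ENNReal.ofReal (lam / 2) ^ p *
          volume.restrict K {x | ENNReal.ofReal (lam / 2) ^ p ≤ F x} := by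
        refine mul_le_mul' le_rfl (measure_mono_ae ?_)
        filter_upwards [ae_restrict_mem hK.measurableSet] with x hx using hF x hx
    _ ≤ ∫⁻ x in K, F x := mul_meas_ge_le_lintegral hFm _
    _ = ENNReal.ofReal (2 ^ p) *
          ∫⁻ x in K, (∫⁻ z, ‖Vm p (g (x + r • z)) - Vm p (g x)‖ₑ ^ 2 ∂m) :=
        lintegral_const_mul' _ _ ENNReal.ofReal_ne_top
    _ ≤ _ := by
        gcongr
        exact h.lintegral_lintegral_enorm_sub_sq_le hm hVm hU hV hW hK hr hKU

end LevelSets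

section HolderLevelSets

variable {d : ℕ} {ι : Type} [Fintype ι] {u : Ed d → EuclideanSpace ℝ ι}
  {g : Ed d → EuclideanSpace ℝ (ι × Fin d)} {W : Ed d → EuclideanSpace ℝ ((ι × Fin d) × Fin d)}
  {p α E L lam ρ r : ℝ}

theorem IsWeakGrad.norm_integral_mollifierMeasure_le_of_holder {U : Set (Ed d)} {x : Ed d}
    (h : IsWeakGrad U u g) (hU : MeasurableSet U) (hu : IntegrableOn u U) (hα : 0 ≤ α)
    (hL : 0 ≤ L) (hr : 0 < r) (hxU : closedBall x r ⊆ U)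
    (hholder : ∀ y ∈ U, ‖u y - u x‖ ≤ L * dist y x ^ α) :
    ‖∫ z, g (x + r • z) ∂mollifierMeasure d‖ ≤ mollifierConst ι d * (L * r ^ (α - 1)) := by
  rw [Real.rpow_sub_one hr.ne', ← mul_div_assoc]
  refine h.norm_integral_mollifierMeasure_le hU hu hr hxU fun y hy => (hholder y (hxU hy)).trans ?_
  rw [mem_closedBall] at hy
  gcongr

theorem div_rpow_one_div_one_sub_le_quarter (hα₀ : 0 ≤ α) (hα₁ : α < 1) (hE : 0 < E)
    (hlam : 4 * E ≤ lam) : (E / lam) ^ (1 / (1 - α)) ≤ 1 / 4 := by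
  have hlam₀ : 0 < lam := by linarith
  have hquot : E / lam ≤ 1 / 4 := by
    rw [div_le_div_iff₀ hlam₀ (by norm_num)]
    linarith
  have hexp : 1 ≤ 1 / (1 - α) := (one_le_div (by linarith)).2 (by linarith)
  calc (E / lam) ^ (1 / (1 - α)) ≤ (E / lam) ^ (1 : ℝ) :=
        Real.rpow_le_rpow_of_exponent_ge (by positivity) (by linarith) hexp
    _ ≤ 1 / 4 := by rwa [Real.rpow_one]

theorem le_ofReal_mul_of_half_rpow_mul_le {a b : ℝ≥0∞} {s : ℝ} (hlam : 0 < lam)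
    (h : ENNReal.ofReal (lam / 2) ^ p * a ≤ ENNReal.ofReal (2 ^ p) * (ENNReal.ofReal s * b)) :
    a ≤ ENNReal.ofReal (4 ^ p * lam ^ (-p) * s) * b := by
  have hpos : 0 < (lam / 2) ^ p := by positivity
  have hscale : 4 ^ p * lam ^ (-p) * s = 2 ^ p * s / (lam / 2) ^ p := by
    rw [show (4 : ℝ) = 2 * 2 by norm_num, Real.mul_rpow zero_le_two zero_le_two,
      Real.div_rpow hlam.le zero_le_two, Real.rpow_neg hlam.le]
    field_simp
  rw [ENNReal.ofReal_rpow_of_pos (by positivity), mul_comm, ← ENNReal.le_div_iff_mul_le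
    (Or.inl (by simpa using hpos)) (Or.inl ENNReal.ofReal_ne_top)] at h
  refine h.trans_eq ?_
  rw [hscale, ENNReal.ofReal_div_of_pos hpos, ENNReal.ofReal_mul (by positivity),
    ENNReal.div_eq_inv_mul, ENNReal.div_eq_inv_mul]
  ring

theorem volume_lt_norm_le_of_holder {c : Ed d} (hp : 2 ≤ p) (hα₀ : 0 ≤ α) (hα₁ : α < 1)
    (hρ : 0 < ρ) (hug : IsWeakGrad (cube c ρ) u g) (hu : IntegrableOn u (cube c ρ))
    (hgm : StronglyMeasurable g) (hVW : IsWeakGrad (cube c ρ) (fun x => Vm p (g x)) W)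
    (hV : IntegrableOn (fun x => Vm p (g x)) (cube c ρ)) (hW : IntegrableOn W (cube c ρ))
    (hL : 0 ≤ L) (hholder : ∀ x ∈ cube c ρ, ∀ y ∈ cube c ρ,
      ‖u x - u y‖ ≤ L * ρ ^ (1 - α) * dist x y ^ α)
    (hE : 0 < E) (hLE : 2 * mollifierConst ι d * L ≤ E) (hlam : 4 * E ≤ lam) :
    volume.restrict (cube c (ρ / 2)) {x | lam < ‖g x‖} ≤
      ENNReal.ofReal (4 ^ p * ρ ^ 2 * E ^ (2 / (1 - α)) * lam ^ (-(p + 2 / (1 - α)))) *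
        ∫⁻ x in cube c ρ, ‖W x‖ₑ ^ 2 := by
  have hlam₀ : 0 < lam := by linarith
  have hα : 0 < 1 - α := by linarith
  -- The mollified gradient at scale `ρ * θ` is of order `θ ^ (α - 1)`; this is the smallest scale
  -- for which it is guaranteed to stay below `lam / 2`.
  set θ := (E / lam) ^ (1 / (1 - α)) with hθdef
  have hθ : 0 < θ := by positivity
  have hθ4 : θ ≤ 1 / 4 := div_rpow_one_div_one_sub_le_quarter hα₀ hα₁ hE hlam
  have hball (x : Ed d) (hx : x ∈ cube c (ρ / 2)) : closedBall x (ρ * θ) ⊆ cube c ρ := by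
    intro y hy
    rw [mem_closedBall_iff_norm] at hy
    simpa using add_mem_cube hx (z := y - x) (R' := ρ) (by nlinarith)
  have hmean (x : Ed d) (hx : x ∈ cube c (ρ / 2)) :
      ‖∫ z, g (x + (ρ * θ) • z) ∂mollifierMeasure d‖ ≤ lam / 2 := by
    have hx' := hball x hx (mem_closedBall_self (by positivity))
    calc _ ≤ mollifierConst ι d * (L * ρ ^ (1 - α) * (ρ * θ) ^ (α - 1)) :=
          hug.norm_integral_mollifierMeasure_le_of_holder (measurableSet_cube c ρ) hu hα₀
            (by positivity) (by positivity) (hball x hx) fun y hy => hholder y hy x hx'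
      _ = 2 * mollifierConst ι d * L * (lam / E) / 2 := by
          rw [Real.mul_rpow hρ.le hθ.le, ← neg_sub 1 α, Real.rpow_neg hρ.le, Real.rpow_neg hθ.le,
            hθdef, ← Real.rpow_mul (by positivity), one_div_mul_cancel hα.ne', Real.rpow_one]
          field_simp
      _ ≤ E * (lam / E) / 2 := by gcongr
      _ = lam / 2 := by field_simp
  have hlevel := hVW.rpow_mul_volume_lt_norm_le (ae_norm_le_one_mollifierMeasure d) hp hgm
    (measurableSet_cube c ρ) hV hW (isOpen_cube c _) (by positivity) hball hmean
  convert le_ofReal_mul_of_half_rpow_mul_le hlam₀ hlevel using 3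
  rw [neg_add, Real.rpow_add hlam₀, mul_pow, hθdef, ← Real.rpow_mul_natCast (by positivity),
    Real.div_rpow hE.le hlam₀.le, Real.rpow_neg hlam₀.le (2 / _)]
  push_cast
  field_simp

end HolderLevelSets

section LayerCake

variable {X : Type*} [MeasurableSpace X] {μ : Measure X} {f : X → ℝ} {q s T : ℝ} {M : ℝ≥0∞}

theorem lintegral_Ioc_rpow_sub_one (hq : 0 < q) (hT : 0 ≤ T) :
    ∫⁻ t in Ioc 0 T, ENNReal.ofReal (t ^ (q - 1)) = ENNReal.ofReal (T ^ q / q) := by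
  have hint : IntegrableOn (fun t : ℝ => t ^ (q - 1)) (Ioc 0 T) :=
    (intervalIntegrable_iff_integrableOn_Ioc_of_le hT).1
      (intervalIntegral.intervalIntegrable_rpow' (by linarith))
  rw [← ofReal_integral_eq_lintegral_ofReal hint, ← intervalIntegral.integral_of_le hT,
    integral_rpow (Or.inl (by linarith)), sub_add_cancel, Real.zero_rpow hq.ne', sub_zero]
  filter_upwards [ae_restrict_mem measurableSet_Ioc] with t ht using Real.rpow_nonneg ht.1.le _

theorem lintegral_Ioi_rpow_neg_sub_one (hs : 0 < s) (hT : 0 < T) :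
    ∫⁻ t in Ioi T, ENNReal.ofReal (t ^ (-s - 1)) = ENNReal.ofReal (T ^ (-s) / s) := by
  rw [← ofReal_integral_eq_lintegral_ofReal (integrableOn_Ioi_rpow_of_lt (by linarith) hT),
    integral_Ioi_rpow_of_lt (by linarith) hT, sub_add_cancel, neg_div_neg_eq]
  filter_upwards [ae_restrict_mem measurableSet_Ioi] with t ht
  exact Real.rpow_nonneg (hT.trans ht).le _

theorem lintegral_rpow_le_of_meas_lt_le (hf₀ : 0 ≤ᵐ[μ] f) (hf : AEMeasurable f μ) (hq : 0 < q)
    (hqs : q < s) (hT : 0 < T) (h : ∀ t, T ≤ t → μ {x | t < f x} ≤ M * ENNReal.ofReal (t ^ (-s))) :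
    ∫⁻ x, ENNReal.ofReal (f x ^ q) ∂μ ≤
      μ univ * ENNReal.ofReal (T ^ q) + M * ENNReal.ofReal (q / (s - q) * T ^ (q - s)) := by
  have hsmall : ∫⁻ t in Ioc 0 T, μ {x | t < f x} * ENNReal.ofReal (t ^ (q - 1)) ≤
      μ univ * ENNReal.ofReal (T ^ q / q) := by
    rw [← lintegral_Ioc_rpow_sub_one hq hT.le, ← lintegral_const_mul _ (by fun_prop)]
    gcongr
    exact subset_univ _
  have hlarge : ∫⁻ t in Ioi T, μ {x | t < f x} * ENNReal.ofReal (t ^ (q - 1)) ≤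
      M * ENNReal.ofReal (T ^ (-(s - q)) / (s - q)) := by
    rw [← lintegral_Ioi_rpow_neg_sub_one (sub_pos.2 hqs) hT, ← lintegral_const_mul _ (by fun_prop)]
    refine setLIntegral_mono' measurableSet_Ioi fun t ht => ?_
    have ht₀ : 0 < t := hT.trans ht
    calc μ {x | t < f x} * ENNReal.ofReal (t ^ (q - 1))
        ≤ M * ENNReal.ofReal (t ^ (-s)) * ENNReal.ofReal (t ^ (q - 1)) := by
          gcongr
          exact h t (le_of_lt ht)
      _ = M * ENNReal.ofReal (t ^ (-(s - q) - 1)) := by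
          rw [mul_assoc, ← ENNReal.ofReal_mul (by positivity), ← Real.rpow_add ht₀]
          ring_nf
  rw [lintegral_rpow_eq_lintegral_meas_lt_mul μ hf₀ hf hq, ← Ioc_union_Ioi_eq_Ioi hT.le,
    lintegral_union measurableSet_Ioi (Ioc_disjoint_Ioi le_rfl)]
  refine (mul_le_mul' le_rfl (add_le_add hsmall hlarge)).trans_eq ?_
  rw [mul_add, mul_left_comm, mul_left_comm _ M, ← ENNReal.ofReal_mul hq.le,
    ← ENNReal.ofReal_mul hq.le, mul_div_cancel₀ _ hq.ne', neg_sub, mul_div_assoc',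
    div_mul_eq_mul_div]

end LayerCake

section GradScale

variable {d : ℕ} {E : Type*} [NormedAddCommGroup E] {g : Ed d → E} {c c' : Ed d} {p r k R : ℝ}

/-- The quantity `(⨍_{Q} |g|^p)^{1/p} + 1` on the cube `Q` with center `c` and sidelength `R`, in
which both the Hölder hypothesis and the final estimate are expressed. -/
def gradScale (p : ℝ) (g : Ed d → E) (c : Ed d) (R : ℝ) : ℝ :=
  (⨍ x in cube c R, ‖g x‖ ^ p) ^ (1 / p) + 1

theorem setAverage_norm_rpow_nonneg (g : Ed d → E) (p : ℝ) (S : Set (Ed d)) :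
    0 ≤ ⨍ x in S, ‖g x‖ ^ p :=
  integral_nonneg fun _ => by positivity

theorem one_le_gradScale (p : ℝ) (g : Ed d → E) (c : Ed d) (R : ℝ) : 1 ≤ gradScale p g c R :=
  le_add_of_nonneg_left (Real.rpow_nonneg (setAverage_norm_rpow_nonneg g p _) _)

theorem setAverage_norm_rpow_congr_ae {g' : Ed d → E} {S : Set (Ed d)}
    (h : g =ᵐ[volume.restrict S] g') (p : ℝ) : ⨍ x in S, ‖g x‖ ^ p = ⨍ x in S, ‖g' x‖ ^ p := by
  rw [setAverage_eq, setAverage_eq]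
  congr 1
  exact integral_congr_ae (h.mono fun x hx => by simp only [hx])

theorem gradScale_congr_ae {g' : Ed d → E} (h : g =ᵐ[volume.restrict (cube c R)] g') (p : ℝ) :
    gradScale p g c R = gradScale p g' c R := by
  rw [gradScale, gradScale, setAverage_norm_rpow_congr_ae h]

theorem setAverage_cube (F : Ed d → ℝ) (c : Ed d) (hR : 0 ≤ R) :
    ⨍ x in cube c R, F x = (R ^ d)⁻¹ * ∫ x in cube c R, F x := by
  rw [setAverage_eq, volume_real_cube c hR, smul_eq_mul]

theorem integrable_norm_rpow_of_memLp {X : Type*} [MeasurableSpace X] {μ : Measure X} {f : X → E}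
    (hp : 0 < p) (hf : MemLp f (ENNReal.ofReal p) μ) : Integrable (fun x => ‖f x‖ ^ p) μ := by
  simpa [ENNReal.toReal_ofReal hp.le] using
    hf.integrable_norm_rpow (by simpa using hp) ENNReal.ofReal_ne_top

theorem setIntegral_norm_rpow_le_gradScale_rpow (hp : 0 < p) (hR : 0 < R) :
    ∫ x in cube c R, ‖g x‖ ^ p ≤ R ^ d * gradScale p g c R ^ p := by
  have hnonneg := setAverage_norm_rpow_nonneg g p (cube c R)
  rw [← inv_mul_le_iff₀ (by positivity), ← setAverage_cube _ c hR.le]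
  calc ⨍ x in cube c R, ‖g x‖ ^ p = ((⨍ x in cube c R, ‖g x‖ ^ p) ^ (1 / p)) ^ p := by
        rw [← Real.rpow_mul hnonneg, one_div_mul_cancel hp.ne', Real.rpow_one]
    _ ≤ gradScale p g c R ^ p := by
        gcongr
        exact le_add_of_nonneg_right zero_le_one

theorem setLIntegral_enorm_rpow_le_gradScale_rpow (hp : 0 < p) (hR : 0 < R)
    (hg : MemLp g (ENNReal.ofReal p) (volume.restrict (cube c R))) :
    ∫⁻ x in cube c R, ‖g x‖ₑ ^ p ≤ ENNReal.ofReal (R ^ d * gradScale p g c R ^ p) := by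
  simp only [← ofReal_norm, ENNReal.ofReal_rpow_of_nonneg (norm_nonneg _) hp.le]
  rw [← ofReal_integral_eq_lintegral_ofReal (integrable_norm_rpow_of_memLp hp hg)
    (Eventually.of_forall fun x => by positivity)]
  exact ENNReal.ofReal_le_ofReal (setIntegral_norm_rpow_le_gradScale_rpow hp hR)

theorem gradScale_le_pow_mul_gradScale (hp : 1 ≤ p) (hr : 0 < r) (hk : 1 ≤ k)
    (hsub : cube c' r ⊆ cube c (k * r))
    (hg : MemLp g (ENNReal.ofReal p) (volume.restrict (cube c (k * r)))) :
    gradScale p g c' r ≤ k ^ d * gradScale p g c (k * r) := by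
  have hp₀ : 0 < p := by linarith
  have hkd : 1 ≤ k ^ d := one_le_pow₀ hk
  have havg : ⨍ x in cube c' r, ‖g x‖ ^ p ≤ k ^ d * ⨍ x in cube c (k * r), ‖g x‖ ^ p := by
    rw [setAverage_cube _ _ hr.le, setAverage_cube _ _ (by positivity), mul_pow, mul_inv,
      mul_assoc, mul_inv_cancel_left₀ (by positivity)]
    refine mul_le_mul_of_nonneg_left ?_ (by positivity)
    exact setIntegral_mono_set (integrable_norm_rpow_of_memLp hp₀ hg)
      (Eventually.of_forall fun x => by positivity) hsub.eventuallyLE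
  have hroot : (k ^ d) ^ (1 / p) ≤ k ^ d :=
    Real.rpow_le_self_of_one_le hkd (div_le_one_of_le₀ hp hp₀.le)
  have hpow : (⨍ x in cube c' r, ‖g x‖ ^ p) ^ (1 / p) ≤
      k ^ d * (⨍ x in cube c (k * r), ‖g x‖ ^ p) ^ (1 / p) := by
    have hc := setAverage_norm_rpow_nonneg g p (cube c (k * r))
    refine (Real.rpow_le_rpow (setAverage_norm_rpow_nonneg g p _) havg (by positivity)).trans ?_
    rw [Real.mul_rpow (by positivity) hc]
    gcongr
  rw [gradScale, gradScale, mul_add, mul_one]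
  exact add_le_add hpow hkd

theorem memLp_ofReal_and_setAverage_rpow_le_of_lintegral_le {q C A : ℝ} (hq : 0 < q) (hR : 0 < R)
    (hC : 0 ≤ C) (hA : 0 ≤ A) (hg : AEStronglyMeasurable g (volume.restrict (cube c R)))
    (h : ∫⁻ x in cube c R, ENNReal.ofReal (‖g x‖ ^ q) ≤ ENNReal.ofReal (R ^ d * (C * A ^ q))) :
    MemLp g (ENNReal.ofReal q) (volume.restrict (cube c R)) ∧
      (⨍ x in cube c R, ‖g x‖ ^ q) ^ (1 / q) ≤ C ^ (1 / q) * A := by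
  constructor
  · refine ⟨hg, ?_⟩
    rw [eLpNorm_lt_top_iff_lintegral_rpow_enorm_lt_top (by simpa using hq) ENNReal.ofReal_ne_top,
      ENNReal.toReal_ofReal hq.le]
    simp only [← ofReal_norm, ENNReal.ofReal_rpow_of_nonneg (norm_nonneg _) hq.le]
    exact h.trans_lt ENNReal.ofReal_lt_top
  · have havg : ⨍ x in cube c R, ‖g x‖ ^ q ≤ C * A ^ q := by
      rw [setAverage_cube _ c hR.le, inv_mul_le_iff₀ (by positivity),
        integral_eq_lintegral_of_nonneg_ae (Eventually.of_forall fun x => by positivity)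
          (hg.norm.aemeasurable.pow_const q).aestronglyMeasurable]
      exact ENNReal.toReal_le_of_le_ofReal (by positivity) h
    calc (⨍ x in cube c R, ‖g x‖ ^ q) ^ (1 / q)
        ≤ (C * A ^ q) ^ (1 / q) :=
          Real.rpow_le_rpow (setAverage_norm_rpow_nonneg g q _) havg (by positivity)
      _ = C ^ (1 / q) * A := by
          rw [Real.mul_rpow hC (by positivity), one_div, Real.rpow_rpow_inv hA hq.ne']

end GradScale

section HigherIntegrability

variable {d : ℕ} {ι : Type} [Fintype ι] {Ω : Set (Ed d)} {u : Ed d → EuclideanSpace ℝ ι}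
  {g : Ed d → EuclideanSpace ℝ (ι × Fin d)} {W : Ed d → EuclideanSpace ℝ ((ι × Fin d) × Fin d)}
  {p α c₁ c₂ q R : ℝ} {c : Ed d}

/-- The hypotheses on `u ∈ W^{1,p}(Ω)` with `g = ∇u` and `W = ∇(V(∇u))`: the Caccioppoli estimate
for `V(∇u)` with constant `c₁` and the `C^α` estimate for `u` with constant `c₂`. Here `u` is the
continuous representative itself. -/
structure IsCaccioppoliHolder (p α c₁ c₂ : ℝ) (Ω : Set (Ed d)) (u : Ed d → EuclideanSpace ℝ ι)
    (g : Ed d → EuclideanSpace ℝ (ι × Fin d))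
    (W : Ed d → EuclideanSpace ℝ ((ι × Fin d) × Fin d)) : Prop where
  memLp : MemLp u (ENNReal.ofReal p) (volume.restrict Ω)
  isWeakGrad : IsWeakGrad Ω u g
  memLp_grad : MemLp g (ENNReal.ofReal p) (volume.restrict Ω)
  isWeakGrad_Vm : IsWeakGrad Ω (fun x => Vm p (g x)) W
  caccioppoli : ∀ (c : Ed d) (R : ℝ), 0 < R → cube c (4 * R) ⊆ Ω →
    MemLp W 2 (volume.restrict (cube c R)) ∧ ∫⁻ x in cube c R, ‖W x‖ₑ ^ 2 ≤
      ENNReal.ofReal (c₁ / R ^ 2) * ∫⁻ x in cube c (4 * R), ‖Vm p (g x)‖ₑ ^ 2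
  holder : ∀ (c : Ed d) (R : ℝ), 0 < R → cube c (3 * R) ⊆ Ω →
    ∀ x ∈ cube c R, ∀ y ∈ cube c R,
      ‖u x - u y‖ ≤ c₂ * R ^ (1 - α) * gradScale p g c (2 * R) * dist x y ^ α

namespace IsCaccioppoliHolder

theorem congr_grad (h : IsCaccioppoliHolder p α c₁ c₂ Ω u g W)
    {g' : Ed d → EuclideanSpace ℝ (ι × Fin d)} (hg : g =ᵐ[volume.restrict Ω] g') :
    IsCaccioppoliHolder p α c₁ c₂ Ω u g' W where
  memLp := h.memLp
  isWeakGrad := h.isWeakGrad.congr_ae .rfl hg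
  memLp_grad := h.memLp_grad.ae_eq hg
  isWeakGrad_Vm := h.isWeakGrad_Vm.congr_ae (hg.mono fun x hx => by simp only [hx]) .rfl
  caccioppoli c R hR hsub := by
    have hVm : ∫⁻ x in cube c (4 * R), ‖Vm p (g x)‖ₑ ^ 2 =
        ∫⁻ x in cube c (4 * R), ‖Vm p (g' x)‖ₑ ^ 2 :=
      lintegral_congr_ae <| (ae_restrict_of_ae_restrict_of_subset hsub hg).mono fun x hx => by
        simp only [hx]
    exact hVm ▸ h.caccioppoli c R hR hsub
  holder c R hR hsub := by
    have hscale : gradScale p g c (2 * R) = gradScale p g' c (2 * R) :=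
      gradScale_congr_ae (ae_restrict_of_ae_restrict_of_subset
        ((cube_subset_cube_of_le c (by linarith)).trans hsub) hg) p
    exact hscale ▸ h.holder c R hR hsub

theorem volume_lt_norm_le {E ρ lam : ℝ} (h : IsCaccioppoliHolder p α c₁ c₂ Ω u g W)
    (hgm : StronglyMeasurable g) (hp : 2 ≤ p) (hα₀ : 0 ≤ α) (hα₁ : α < 1) (hc₂ : 0 ≤ c₂)
    (hρ : 0 < ρ) (hsub : cube c (4 * ρ) ⊆ Ω) (hE : 0 < E)
    (hscale : 2 * mollifierConst ι d * (c₂ * gradScale p g c (2 * ρ)) ≤ E) (hlam : 4 * E ≤ lam) :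
    volume.restrict (cube c (ρ / 2)) {x | lam < ‖g x‖} ≤
      ENNReal.ofReal (4 ^ p * c₁ * E ^ (2 / (1 - α)) * lam ^ (-(p + 2 / (1 - α)))) *
        ∫⁻ x in cube c (4 * ρ), ‖g x‖ₑ ^ p := by
  have hp₁ : 1 ≤ ENNReal.ofReal p := ENNReal.one_le_ofReal.2 (by linarith)
  have hρΩ : cube c ρ ⊆ Ω := (cube_subset_cube_of_le c (by linarith)).trans hsub
  have hrestrict : volume.restrict (cube c ρ) ≤ volume.restrict Ω :=
    Measure.restrict_mono hρΩ le_rfl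
  obtain ⟨hWmem, hWle⟩ := h.caccioppoli c ρ hρ hsub
  have hlevel := volume_lt_norm_le_of_holder hp hα₀ hα₁ hρ (h.isWeakGrad.mono hρΩ)
    ((h.memLp.mono_measure hrestrict).integrable hp₁) hgm (h.isWeakGrad_Vm.mono hρΩ)
    ((memLp_two_Vm hp (h.memLp_grad.mono_measure hrestrict)).integrable one_le_two)
    (hWmem.integrable one_le_two)
    (mul_nonneg hc₂ (zero_le_one.trans (one_le_gradScale p g c (2 * ρ))))
    (fun x hx y hy => (h.holder c ρ hρ ((cube_subset_cube_of_le c (by linarith)).trans hsub)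
      x hx y hy).trans_eq (by ring)) hE hscale hlam
  have hlam₀ : 0 < lam := by linarith
  refine (hlevel.trans (mul_le_mul' le_rfl hWle)).trans_eq ?_
  rw [← mul_assoc, ← ENNReal.ofReal_mul (by positivity)]
  simp only [enorm_Vm_sq (show 0 < p by linarith)]
  congr 2
  field_simp

theorem volume_lt_norm_le_of_cube_subset {c' : Ed d} {e t : ℝ}
    (h : IsCaccioppoliHolder p α c₁ c₂ Ω u g W) (hgm : StronglyMeasurable g) (hp : 2 ≤ p)
    (hα₀ : 0 ≤ α) (hα₁ : α < 1) (hc₂ : 0 ≤ c₂) (hR : 0 < R) (hsub : cube c (2 * R) ⊆ Ω)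
    (hsub' : cube c' R ⊆ cube c (2 * R)) (he : 0 < e)
    (hscale : 2 * mollifierConst ι d * (c₂ * 4 ^ d) ≤ e)
    (ht : 4 * (e * gradScale p g c (2 * R)) ≤ t) :
    volume.restrict (cube c' (R / 8)) {x | t < ‖g x‖} ≤
      ENNReal.ofReal (4 ^ p * c₁ * (e * gradScale p g c (2 * R)) ^ (2 / (1 - α)) *
        t ^ (-(p + 2 / (1 - α)))) *
          ENNReal.ofReal ((2 * R) ^ d * gradScale p g c (2 * R) ^ p) := by
  have hmem : MemLp g (ENNReal.ofReal p) (volume.restrict (cube c (2 * R))) :=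
    h.memLp_grad.mono_measure (Measure.restrict_mono hsub le_rfl)
  have hA : 0 < gradScale p g c (2 * R) :=
    zero_lt_one.trans_le (one_le_gradScale p g c (2 * R))
  have hB := mollifierConst_nonneg ι d
  have hR₄ : 4 * (R / 4) = R := by ring
  have hR₂ : 4 * (2 * (R / 4)) = 2 * R := by ring
  have hscale' : gradScale p g c' (2 * (R / 4)) ≤ 4 ^ d * gradScale p g c (2 * R) := by
    rw [← hR₂]
    refine gradScale_le_pow_mul_gradScale (by linarith) (by positivity) (by norm_num) ?_ ?_
    · exact hR₂.symm ▸ (cube_subset_cube_of_le _ (by linarith)).trans hsub'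
    · rwa [hR₂]
  have hE : 2 * mollifierConst ι d * (c₂ * gradScale p g c' (2 * (R / 4))) ≤
      e * gradScale p g c (2 * R) :=
    calc 2 * mollifierConst ι d * (c₂ * gradScale p g c' (2 * (R / 4)))
        ≤ 2 * mollifierConst ι d * (c₂ * (4 ^ d * gradScale p g c (2 * R))) := by gcongr
      _ = 2 * mollifierConst ι d * (c₂ * 4 ^ d) * gradScale p g c (2 * R) := by ring
      _ ≤ e * gradScale p g c (2 * R) := by gcongr
  have hlevel := h.volume_lt_norm_le (c := c') hgm hp hα₀ hα₁ hc₂ (by positivity : 0 < R / 4)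
    (by rw [hR₄]; exact hsub'.trans hsub) (by positivity) hE ht
  rw [hR₄, div_div, show (4 * 2 : ℝ) = 8 by norm_num] at hlevel
  refine hlevel.trans (mul_le_mul' le_rfl ?_)
  exact (lintegral_mono_set hsub').trans
    (setLIntegral_enorm_rpow_le_gradScale_rpow (by linarith) (by positivity) hmem)

end IsCaccioppoliHolder

theorem restrict_apply_le_sum_of_subset_biUnion {X κ : Type*} [MeasurableSpace X] {μ : Measure X}
    {Z : Finset κ} {K : κ → Set X} {Q S : Set X} (hS : MeasurableSet S)
    (hQ : Q ⊆ ⋃ z ∈ Z, K z) : μ.restrict Q S ≤ ∑ z ∈ Z, μ.restrict (K z) S := by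
  simp only [Measure.restrict_apply hS]
  calc μ (S ∩ Q) ≤ μ (⋃ z ∈ Z, S ∩ K z) := by
        rw [← inter_iUnion₂]
        gcongr
    _ ≤ ∑ z ∈ Z, μ (S ∩ K z) := measure_biUnion_finset_le _ _

theorem exists_volume_lt_norm_le (ι : Type) [Fintype ι] (d : ℕ) (hp : 2 ≤ p) (hα₀ : 0 ≤ α)
    (hα₁ : α < 1) (hc₁ : 0 ≤ c₁) (hc₂ : 0 ≤ c₂) :
    ∃ e M : ℝ, 0 < e ∧ 0 ≤ M ∧
      ∀ {Ω : Set (Ed d)} {u : Ed d → EuclideanSpace ℝ ι} {g : Ed d → EuclideanSpace ℝ (ι × Fin d)}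
        {W : Ed d → EuclideanSpace ℝ ((ι × Fin d) × Fin d)},
        IsCaccioppoliHolder p α c₁ c₂ Ω u g W → StronglyMeasurable g →
      ∀ (c : Ed d) (R : ℝ), 0 < R → cube c (2 * R) ⊆ Ω →
      ∀ t, e * gradScale p g c (2 * R) ≤ t →
        volume.restrict (cube c R) {x | t < ‖g x‖} ≤
          ENNReal.ofReal (M * R ^ d * gradScale p g c (2 * R) ^ (p + 2 / (1 - α))) *
            ENNReal.ofReal (t ^ (-(p + 2 / (1 - α)))) := by
  obtain ⟨Z, hZ⟩ := exists_finset_cube_subset_iUnion_cube d (ε := 1 / 8) (by norm_num)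
  have hB := mollifierConst_nonneg ι d
  set e := 2 * mollifierConst ι d * (c₂ * 4 ^ d) + 1 with he
  have he₀ : 0 < e := by positivity
  refine ⟨4 * e, Z.card * (4 ^ p * c₁ * e ^ (2 / (1 - α)) * 2 ^ d), by positivity, by positivity,
    fun {Ω u g W} h hgm c R hR hsub t ht => ?_⟩
  have hA : 0 < gradScale p g c (2 * R) :=
    zero_lt_one.trans_le (one_le_gradScale p g c (2 * R))
  have ht₀ : 0 < t := lt_of_lt_of_le (by positivity) ht
  have hpiece (z : Ed d) (hz : z ∈ Z) :=
    h.volume_lt_norm_le_of_cube_subset hgm hp hα₀ hα₁ hc₂ hR hsub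
      (two_mul R ▸ cube_subset_cube_of_mem ((hZ c R hR).1 z hz)) he₀ (by linarith)
      (t := t) (by linarith)
  have hmeas : MeasurableSet {x | t < ‖g x‖} :=
    measurableSet_lt measurable_const hgm.norm.measurable
  have hcover := restrict_apply_le_sum_of_subset_biUnion (μ := volume) hmeas (hZ c R hR).2
  simp only [mul_one_div] at hcover
  refine hcover.trans ((Finset.sum_le_card_nsmul _ _ _ hpiece).trans_eq ?_)
  rw [← ENNReal.ofReal_mul (by positivity), ← ENNReal.ofReal_mul (by positivity),
    ← ENNReal.ofReal_nsmul, nsmul_eq_mul, Real.mul_rpow he₀.le hA.le, Real.rpow_add hA, mul_pow]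
  congr 1
  ring

theorem exists_lintegral_rpow_le (ι : Type) [Fintype ι] (d : ℕ) (hp : 2 ≤ p) (hα₀ : 0 ≤ α)
    (hα₁ : α < 1) (hc₁ : 0 ≤ c₁) (hc₂ : 0 ≤ c₂) (hq₀ : 0 < q) (hq : q < p + 2 / (1 - α)) :
    ∃ C : ℝ, 0 < C ∧
      ∀ {Ω : Set (Ed d)} {u : Ed d → EuclideanSpace ℝ ι} {g : Ed d → EuclideanSpace ℝ (ι × Fin d)}
        {W : Ed d → EuclideanSpace ℝ ((ι × Fin d) × Fin d)},
        IsCaccioppoliHolder p α c₁ c₂ Ω u g W → StronglyMeasurable g →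
      ∀ (c : Ed d) (R : ℝ), 0 < R → cube c (2 * R) ⊆ Ω →
        ∫⁻ x in cube c R, ENNReal.ofReal (‖g x‖ ^ q) ≤
          ENNReal.ofReal (R ^ d * (C * gradScale p g c (2 * R) ^ q)) := by
  obtain ⟨e, M, he, hM, hlevel⟩ := exists_volume_lt_norm_le ι d hp hα₀ hα₁ hc₁ hc₂
  set s := p + 2 / (1 - α)
  have hqs : 0 < s - q := sub_pos.2 hq
  refine ⟨e ^ q + M * (q / (s - q) * e ^ (q - s)), by positivity,
    fun {Ω u g W} h hgm c R hR hsub => ?_⟩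
  have hA : 0 < gradScale p g c (2 * R) :=
    zero_lt_one.trans_le (one_le_gradScale p g c (2 * R))
  refine (lintegral_rpow_le_of_meas_lt_le (Eventually.of_forall fun x => norm_nonneg (g x))
    hgm.norm.measurable.aemeasurable hq₀ hq (mul_pos he hA) (hlevel h hgm c R hR hsub)).trans_eq ?_
  rw [Measure.restrict_apply_univ, volume_cube, ← ENNReal.ofReal_pow hR.le,
    ← ENNReal.ofReal_mul (by positivity), ← ENNReal.ofReal_mul (by positivity),
    ← ENNReal.ofReal_add (by positivity) (by positivity)]
  congr 1
  rw [Real.mul_rpow he.le hA.le, Real.mul_rpow he.le hA.le, Real.rpow_sub hA]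
  field_simp

theorem stmt7_general (ι : Type) [Fintype ι] (d : ℕ) (hp : 2 ≤ p) (hα₀ : 0 ≤ α) (hα₁ : α < 1)
    (hc₁ : 0 ≤ c₁) (hc₂ : 0 ≤ c₂) (hq₀ : 0 < q) (hq : q < p + 2 / (1 - α)) :
    ∃ C : ℝ, 0 < C ∧
      ∀ {Ω : Set (Ed d)} {u : Ed d → EuclideanSpace ℝ ι} {g : Ed d → EuclideanSpace ℝ (ι × Fin d)}
        {W : Ed d → EuclideanSpace ℝ ((ι × Fin d) × Fin d)},
        IsCaccioppoliHolder p α c₁ c₂ Ω u g W →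
      ∀ (c : Ed d) (R : ℝ), 0 < R → cube c (2 * R) ⊆ Ω →
        MemLp g (ENNReal.ofReal q) (volume.restrict (cube c R)) ∧
          (⨍ x in cube c R, ‖g x‖ ^ q) ^ (1 / q) ≤ C * gradScale p g c (2 * R) := by
  obtain ⟨C, hC, hint⟩ := exists_lintegral_rpow_le ι d hp hα₀ hα₁ hc₁ hc₂ hq₀ hq
  refine ⟨C ^ (1 / q), by positivity, fun {Ω u g W} h c R hR hsub => ?_⟩
  obtain ⟨g', hg', hgg'⟩ := h.memLp_grad.1
  have hgg'₂ : g =ᵐ[volume.restrict (cube c (2 * R))] g' :=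
    ae_restrict_of_ae_restrict_of_subset hsub hgg'
  have hgg'₁ : g =ᵐ[volume.restrict (cube c R)] g' :=
    ae_restrict_of_ae_restrict_of_subset (cube_subset_cube_of_le c (by linarith)) hgg'₂
  obtain ⟨hmem, hle⟩ := memLp_ofReal_and_setAverage_rpow_le_of_lintegral_le hq₀ hR hC.le
    (zero_le_one.trans (one_le_gradScale p g' c (2 * R))) hg'.aestronglyMeasurable
    (hint (h.congr_grad hgg') hg' c R hR hsub)
  refine ⟨hmem.ae_eq hgg'₁.symm, ?_⟩
  rwa [setAverage_norm_rpow_congr_ae hgg'₁ q, gradScale_congr_ae hgg'₂ p]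

end HigherIntegrability

/-- Higher integrability up to `L^q`, `q ∈ (p, p + 2/(1−α))`, for `p ≥ 2`:
`∇u ∈ L^q_loc(Q₀)` with `(⨍_Q |∇u|^q)^{1/q} ≤ C((⨍_{2Q}|∇u|^p)^{1/p} + 1)` whenever
`2Q ⊆ Q₀`, with `C = C(d,N,p,q,α,c₁,c₂)`. -/
theorem stmt7 (d N : ℕ) (p α c₁ c₂ : ℝ) (hp : 2 ≤ p) (hα : α ∈ Set.Ioo (0 : ℝ) 1)
    (hc₁ : 0 < c₁) (hc₂ : 0 < c₂) :
    ∀ q : ℝ, p < q → q < p + 2 / (1 - α) →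
    ∃ C : ℝ, 0 < C ∧
      ∀ (c₀ : Ed d) (R₀ : ℝ), 0 < R₀ →
      ∀ (u v : Ed d → En N) (g : Ed d → Mat N d)
        (W : Ed d → EuclideanSpace ℝ ((Fin N × Fin d) × Fin d)),
        -- `u ∈ W^{1,p}(Q₀;ℝ^N)` with weak gradient `g`
        MemLp u (ENNReal.ofReal p) (volume.restrict (cube c₀ R₀)) →
        IsWeakGrad (cube c₀ R₀) u g →
        MemLp g (ENNReal.ofReal p) (volume.restrict (cube c₀ R₀)) →
        -- (i) `V(∇u) ∈ W^{1,2}_loc(Q₀)` with the Caccioppoli estimate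
        IsWeakGrad (cube c₀ R₀) (fun x => Vm p (g x)) W →
        (∀ (cq : Ed d) (R : ℝ), 0 < R → cube cq (4 * R) ⊆ cube c₀ R₀ →
          MemLp W 2 (volume.restrict (cube cq R)) ∧
          ∫⁻ x in cube cq R, (‖W x‖₊ : ℝ≥0∞) ^ 2 ≤
            ENNReal.ofReal (c₁ / R ^ 2) *
              ∫⁻ x in cube cq (4 * R), (‖Vm p (g x)‖₊ : ℝ≥0∞) ^ 2) →
        -- (ii) `v` is a continuous representative satisfying the Hölder estimate
        ContinuousOn v (cube c₀ R₀) →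
        u =ᵐ[volume.restrict (cube c₀ R₀)] v →
        (∀ (cq : Ed d) (R : ℝ), 0 < R → cube cq (3 * R) ⊆ cube c₀ R₀ →
          ∀ x ∈ cube cq R, ∀ y ∈ cube cq R,
            ‖v x - v y‖ ≤
              c₂ * R ^ (1 - α) * ((⨍ z in cube cq (2 * R), ‖g z‖ ^ p) ^ (1 / p) + 1) *
                dist x y ^ α) →
      ∀ (cq : Ed d) (R : ℝ), 0 < R → cube cq (2 * R) ⊆ cube c₀ R₀ →
        MemLp g (ENNReal.ofReal q) (volume.restrict (cube cq R)) ∧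
        (⨍ x in cube cq R, ‖g x‖ ^ q) ^ (1 / q) ≤
          C * ((⨍ x in cube cq (2 * R), ‖g x‖ ^ p) ^ (1 / p) + 1) := by
  intro q hpq hq
  obtain ⟨C, hC, hbound⟩ :=
    stmt7_general (Fin N) d hp hα.1.le hα.2 hc₁.le hc₂.le (by linarith) hq
  exact ⟨C, hC, fun c₀ R₀ _ u v g W hu hug hg hVW hcacc _ huv hholder =>
    hbound ⟨hu.ae_eq huv, hug.congr_ae huv .rfl, hg, hVW, hcacc, hholder⟩⟩
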